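/- arXiv:2302.01598 — 4 statements merged into one kernel-verified Lean document; each statement's English description precedes it below -/
import Mathlib

section
/- Let k be a field and let Y be a retract rational k-variety. Then for any rational map f : Y ⇢ P^N which is generically injective, there is a rational section g : P^N ⇢ Y, i.e. a rational map g such that g ∘ f is defined and coincides with the identity as a rational map. -/
open AlgebraicGeometry CategoryTheory CategoryTheory.Limits TopologicalSpace

universe u

attribute [local instance] MvPolynomial.gradedAlgebra

noncomputable def ProjSpace (k : Type u) [Field k] (N : ℕ) : Scheme.{u} :=
  Proj (MvPolynomial.homogeneousSubmodule (Fin (N + 1)) k)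

noncomputable def ProjSpace.structMap (k : Type u) [Field k] (N : ℕ) :
    ProjSpace k N ⟶ Spec (CommRingCat.of k) :=
  Proj.toSpecZero _ ≫ Spec.map (CommRingCat.ofHom
    ((GradedRing.projZeroRingHom' (MvPolynomial.homogeneousSubmodule (Fin (N + 1)) k)).comp
      (MvPolynomial.C : k →+* MvPolynomial (Fin (N + 1)) k)))

def AlgebraicGeometry.Scheme.PartialMap.CompEqId {X Y : Scheme.{u}}
    (f : X.PartialMap Y) (g : Y.PartialMap X) : Prop :=
  ∃ (U : X.Opens) (_ : Dense (U : Set X)) (hle : U ≤ f.domain)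
    (lift : (U : Scheme.{u}) ⟶ (g.domain : Scheme.{u})),
      lift ≫ g.domain.ι = X.homOfLE hle ≫ f.hom ∧ lift ≫ g.hom = U.ι

def AlgebraicGeometry.Scheme.PartialMap.IsOverStruct {X Y B : Scheme.{u}}
    (sX : X ⟶ B) (sY : Y ⟶ B) (f : X.PartialMap Y) : Prop :=
  f.hom ≫ sY = f.domain.ι ≫ sX

/-- A scheme `X` with structure morphism `sX` over a field `K` is retract rational if the
identity on `X` factors rationally through some projective space `ℙ^N_K`:  there are
rational (partial) maps `f : X ⤏ ℙ^N` and `g : ℙ^N ⤏ X` over `K` such that `g ∘ f` is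
defined and agrees with the identity as a rational map. -/
def IsRetractRational (K : Type u) [Field K] (X : Scheme.{u})
    (sX : X ⟶ Spec (CommRingCat.of K)) : Prop :=
  ∃ (N : ℕ), 1 ≤ N ∧
    ∃ (f : X.PartialMap (ProjSpace K N)) (g : (ProjSpace K N).PartialMap X),
      f.IsOverStruct sX (ProjSpace.structMap K N) ∧
      g.IsOverStruct (ProjSpace.structMap K N) sX ∧
      f.CompEqId g

/-- Base change of a `k`-scheme along a field extension `k → K`. -/
noncomputable def baseChange {k : Type u} [Field k] (K : Type u) [Field K] [Algebra k K]
    {X : Scheme.{u}} (sX : X ⟶ Spec (CommRingCat.of k)) : Scheme.{u} :=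
  Limits.pullback sX (Spec.map (CommRingCat.ofHom (algebraMap k K)))

/-- The structure morphism of the base change. -/
noncomputable def baseChangeStruct {k : Type u} [Field k] (K : Type u) [Field K] [Algebra k K]
    {X : Scheme.{u}} (sX : X ⟶ Spec (CommRingCat.of k)) :
    baseChange K sX ⟶ Spec (CommRingCat.of K) :=
  Limits.pullback.snd sX (Spec.map (CommRingCat.ofHom (algebraMap k K)))

/-- A `k`-scheme is geometrically retract rational if its base change to an algebraic
closure of `k` is retract rational. -/
def IsGeometricallyRetractRational (k : Type u) [Field k] (X : Scheme.{u})
    (sX : X ⟶ Spec (CommRingCat.of k)) : Prop :=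
  IsRetractRational (AlgebraicClosure k) (baseChange (AlgebraicClosure k) sX)
    (baseChangeStruct (AlgebraicClosure k) sX)

/-- A partial (rational) map `f : X ⤏ Y` is generically injective if on suitable dense open
subsets `U ⊆ X` and `V ⊆ Y` it restricts to a closed embedding `U ↪ V`. -/
def AlgebraicGeometry.Scheme.PartialMap.GenericallyInjective {X Y : Scheme.{u}}
    (f : X.PartialMap Y) : Prop :=
  ∃ (U : X.Opens) (_ : Dense (U : Set X)) (hle : U ≤ f.domain)
    (V : Y.Opens) (_ : Dense (V : Set Y)) (h : (U : Scheme.{u}) ⟶ (V : Scheme.{u})),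
      h ≫ V.ι = X.homOfLE hle ≫ f.hom ∧ IsClosedImmersion h

/-- A `K`-scheme is unirational if it admits a dominant rational map from some
projective space over `K`. -/
def IsUnirational (K : Type u) [Field K] (X : Scheme.{u})
    (sX : X ⟶ Spec (CommRingCat.of K)) : Prop :=
  ∃ (N : ℕ) (g : (ProjSpace K N).PartialMap X),
    g.IsOverStruct (ProjSpace.structMap K N) sX ∧ IsDominant g.hom

/-- Two schemes over a base are birational (over the base) if there are rational maps
between them, over the base, which are mutually inverse as rational maps. -/
def AreBirationalOver {X Y B : Scheme.{u}} (sX : X ⟶ B) (sY : Y ⟶ B) : Prop :=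
  ∃ (f : X.PartialMap Y) (g : Y.PartialMap X),
    f.IsOverStruct sX sY ∧ g.IsOverStruct sY sX ∧ f.CompEqId g ∧ g.CompEqId f

theorem MvPolynomial.IsHomogeneous.eval₂_const_mul {R S ι : Type*} [CommSemiring R]
    [CommSemiring S] {p : MvPolynomial ι R} {n : ℕ} (hp : p.IsHomogeneous n) (f : R →+* S)
    (c : S) (g : ι → S) :
    p.eval₂ f (fun j => c * g j) = c ^ n * p.eval₂ f g := by
  simp only [MvPolynomial.eval₂_eq, Finset.mul_sum]
  refine Finset.sum_congr rfl fun d hd => ?_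
  have hd' : ∑ i ∈ d.support, d i = n := by
    rw [← hp (MvPolynomial.mem_support_iff.mp hd)]
    simp [Finsupp.weight_apply, Finsupp.sum]
  simp only [mul_pow, Finset.prod_mul_distrib, Finset.prod_pow_eq_pow_sum, hd']
  ring

theorem ProjSpace.irreducibleSpace (k : Type u) [Field k] (N : ℕ) :
    IrreducibleSpace (ProjSpace k N) := by
  let 𝒜 := MvPolynomial.homogeneousSubmodule (Fin (N + 1)) k
  let η : ProjSpace k N := show ProjectiveSpectrum 𝒜 from
    { asHomogeneousIdeal := ⊥
      isPrime := by
        rw [HomogeneousIdeal.toIdeal_bot]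
        exact Ideal.isPrime_bot
      not_irrelevant_le := by
        intro h
        have hX : (MvPolynomial.X 0 : MvPolynomial (Fin (N + 1)) k) ∈
            HomogeneousIdeal.irrelevant 𝒜 := by
          rw [HomogeneousIdeal.mem_irrelevant_iff, GradedRing.proj_apply]
          exact DirectSum.decompose_of_mem_ne 𝒜 (i := 1) (MvPolynomial.isHomogeneous_X k 0)
            one_ne_zero
        exact MvPolynomial.X_ne_zero (R := k) (0 : Fin (N + 1)) (h hX) }
  have hη : closure {η} = Set.univ := by
    refine Set.eq_univ_of_forall fun x => ?_
    exact (ProjectiveSpectrum.le_iff_mem_closure (𝒜 := 𝒜) η x).mp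
      ((ProjectiveSpectrum.as_ideal_le_as_ideal (𝒜 := 𝒜) η x).mp bot_le)
  have : IsIrreducible (Set.univ : Set (ProjSpace k N)) := hη ▸ isIrreducible_singleton.closure
  exact (irreducibleSpace_def _).mpr this

theorem MvPolynomial.X_mem_homogeneousSubmodule {ι : Type*} (k : Type*) [CommSemiring k] (i : ι) :
    (MvPolynomial.X i : MvPolynomial ι k) ∈ MvPolynomial.homogeneousSubmodule ι k 1 :=
  MvPolynomial.isHomogeneous_X k i

/-- The structure map of the coordinate ring of the `i`-th standard chart of projective space. -/
noncomputable abbrev ProjSpace.awayC (k : Type u) [Field k] (N : ℕ) (i : Fin (N + 1)) :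
    k →+* HomogeneousLocalization.Away (MvPolynomial.homogeneousSubmodule (Fin (N + 1)) k)
      (MvPolynomial.X i) :=
  (HomogeneousLocalization.fromZeroRingHom _ _).comp
    ((GradedRing.projZeroRingHom' (MvPolynomial.homogeneousSubmodule (Fin (N + 1)) k)).comp
      (MvPolynomial.C : k →+* MvPolynomial (Fin (N + 1)) k))

/-- The `j`-th affine coordinate `X j / X i` on the `i`-th standard chart of projective space. -/
noncomputable def ProjSpace.awayCoord (k : Type u) [Field k] (N : ℕ) (i j : Fin (N + 1)) :
    HomogeneousLocalization.Away (MvPolynomial.homogeneousSubmodule (Fin (N + 1)) k)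
      (MvPolynomial.X i) :=
  .mk _ (d := 1) (MvPolynomial.X_mem_homogeneousSubmodule k i) 1 (MvPolynomial.X j)
    (MvPolynomial.X_mem_homogeneousSubmodule k j)

theorem ProjSpace.eval₂_awayCoord (k : Type u) [Field k] (N : ℕ) (i : Fin (N + 1)) (n : ℕ)
    (p : MvPolynomial (Fin (N + 1)) k)
    (hp : p ∈ MvPolynomial.homogeneousSubmodule (Fin (N + 1)) k (n • 1)) :
    p.eval₂ (ProjSpace.awayC k N i) (ProjSpace.awayCoord k N i) =
      .mk _ (MvPolynomial.X_mem_homogeneousSubmodule k i) n p hp := by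
  let 𝒜 := MvPolynomial.homogeneousSubmodule (Fin (N + 1)) k
  let x : MvPolynomial (Fin (N + 1)) k := MvPolynomial.X i
  let v := algebraMap (HomogeneousLocalization.Away 𝒜 x) (Localization.Away x)
  let a := algebraMap (MvPolynomial (Fin (N + 1)) k) (Localization.Away x)
  refine HomogeneousLocalization.val_injective _ ?_
  rw [HomogeneousLocalization.Away.val_mk]
  change v _ = _
  rw [MvPolynomial.hom_eval₂]
  have hC : v.comp (ProjSpace.awayC k N i) = a.comp MvPolynomial.C := by
    ext c
    refine Eq.trans (b := Localization.mk (MvPolynomial.C c) 1)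
      (congrArg (Localization.mk · 1) ?_) (Localization.mk_one_eq_algebraMap _)
    change ((GradedRing.projZeroRingHom' 𝒜 (MvPolynomial.C c) : 𝒜 0) :
      MvPolynomial (Fin (N + 1)) k) = _
    rw [GradedRing.coe_projZeroRingHom'_apply, GradedRing.projZeroRingHom_apply]
    exact DirectSum.decompose_of_mem_same 𝒜 (MvPolynomial.isHomogeneous_C _ c)
  have hX : ∀ j, a (MvPolynomial.X j) = a x * (v ∘ ProjSpace.awayCoord k N i) j := by
    intro j
    change _ = a x * Localization.mk _ _
    rw [← Localization.mk_one_eq_algebraMap, ← Localization.mk_one_eq_algebraMap,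
      Localization.mk_mul, Localization.mk_eq_mk_iff, Localization.r_iff_exists]
    exact ⟨1, by simp [x]⟩
  have hp' : a p = a x ^ n * p.eval₂ (a.comp MvPolynomial.C) (v ∘ ProjSpace.awayCoord k N i) := by
    rw [← MvPolynomial.IsHomogeneous.eval₂_const_mul (n := n) (by simpa using hp)]
    simp_rw [← hX]
    conv_lhs => rw [← MvPolynomial.eval₂_eta p, MvPolynomial.hom_eval₂]
  rw [hC, Localization.mk_eq_mk', eq_comm, IsLocalization.mk'_eq_iff_eq_mul]
  change a p = _ * a (x ^ n)
  rw [hp', map_pow, mul_comm]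
  rfl

/-- A ring homomorphism from the coordinate ring of a standard chart of projective space lifts
along a surjection, compatibly with prescribed structure maps from `k`. -/
theorem ProjSpace.exists_lift_away (k : Type u) [Field k] (N : ℕ) (i : Fin (N + 1)) {B C : Type u}
    [CommRing B] [CommRing C] (π : B →+* C) (hπ : Function.Surjective π)
    (φ : HomogeneousLocalization.Away (MvPolynomial.homogeneousSubmodule (Fin (N + 1)) k)
      (MvPolynomial.X i) →+* C)
    (τ : k →+* B) (h : π.comp τ = φ.comp (ProjSpace.awayC k N i)) :
    ∃ ψ : HomogeneousLocalization.Away (MvPolynomial.homogeneousSubmodule (Fin (N + 1)) k)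
      (MvPolynomial.X i) →+* B, π.comp ψ = φ ∧ ψ.comp (ProjSpace.awayC k N i) = τ := by
  let 𝒜 := MvPolynomial.homogeneousSubmodule (Fin (N + 1)) k
  let x : MvPolynomial (Fin (N + 1)) k := MvPolynomial.X i
  obtain ⟨b, hb⟩ : ∃ b : Fin (N + 1) → B,
      b i = 1 ∧ ∀ j, π (b j) = φ (ProjSpace.awayCoord k N i j) := by
    choose b hb using fun j => hπ (φ (ProjSpace.awayCoord k N i j))
    refine ⟨Function.update b i 1, by simp, fun j => ?_⟩
    obtain rfl | hj := eq_or_ne j i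
    · have : ProjSpace.awayCoord k N j j = 1 := by
        refine HomogeneousLocalization.val_injective _ ?_
        simp only [ProjSpace.awayCoord, HomogeneousLocalization.Away.val_mk,
          HomogeneousLocalization.val_one, pow_one]
        rw [← Localization.mk_one, Localization.mk_eq_mk_iff, Localization.r_iff_exists]
        exact ⟨1, by simp⟩
      simp [this]
    · simp [hj, hb]
  let ev : MvPolynomial (Fin (N + 1)) k →+* B := MvPolynomial.eval₂Hom τ b
  have hev : ev x = 1 := by simp [ev, x, hb.1]
  have hu : IsUnit (ev x) := hev ▸ isUnit_one
  let ψ : HomogeneousLocalization.Away 𝒜 x →+* B :=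
    (IsLocalization.Away.lift (S := Localization.Away x) x hu).comp
      (algebraMap (HomogeneousLocalization.Away 𝒜 x) (Localization.Away x))
  have hψ : ∀ n p hp, ψ (.mk 𝒜 (MvPolynomial.X_mem_homogeneousSubmodule k i) n p hp) = ev p := by
    intro n p hp
    change IsLocalization.Away.lift (S := Localization.Away x) x hu (Localization.mk _ _) = _
    rw [Localization.mk_eq_mk', IsLocalization.Away.lift, IsLocalization.lift_mk'_spec]
    simp [hev, x]
  refine ⟨ψ, ?_, ?_⟩
  · ext z
    obtain ⟨n, p, hp, rfl⟩ :=
      HomogeneousLocalization.Away.mk_surjective 𝒜 (MvPolynomial.X_mem_homogeneousSubmodule k i) z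
    rw [RingHom.comp_apply, hψ, ← ProjSpace.eval₂_awayCoord, MvPolynomial.hom_eval₂, ← h]
    change π (MvPolynomial.eval₂ τ b p) = _
    rw [MvPolynomial.hom_eval₂]
    congr 1
    ext j
    exact hb.2 j
  · ext c
    have : ProjSpace.awayC k N i c =
        .mk 𝒜 (MvPolynomial.X_mem_homogeneousSubmodule k i) 0 (MvPolynomial.C c)
        (by simp only [zero_smul]; exact MvPolynomial.isHomogeneous_C _ c) := by
      rw [← ProjSpace.eval₂_awayCoord, MvPolynomial.eval₂_C]
    rw [RingHom.comp_apply, this, hψ]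
    simp [ev]

/-- The inclusion of the standard affine chart of projective space where `X i` is invertible. -/
noncomputable def ProjSpace.chartι (k : Type u) [Field k] (N : ℕ) (i : Fin (N + 1)) :
    Spec (CommRingCat.of (HomogeneousLocalization.Away
      (MvPolynomial.homogeneousSubmodule (Fin (N + 1)) k) (MvPolynomial.X i))) ⟶ ProjSpace k N :=
  Proj.awayι (MvPolynomial.homogeneousSubmodule (Fin (N + 1)) k) (MvPolynomial.X i)
    (MvPolynomial.X_mem_homogeneousSubmodule k i) one_pos

instance (k : Type u) [Field k] (N : ℕ) (i : Fin (N + 1)) :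
    IsOpenImmersion (ProjSpace.chartι k N i) :=
  inferInstanceAs (IsOpenImmersion (Proj.awayι _ _ _ _))

theorem ProjSpace.chartι_structMap (k : Type u) [Field k] (N : ℕ) (i : Fin (N + 1)) :
    ProjSpace.chartι k N i ≫ ProjSpace.structMap k N =
      Spec.map (CommRingCat.ofHom (ProjSpace.awayC k N i)) := by
  refine (Proj.awayι_toSpecZero_assoc _ _ _ _ _).trans ?_
  rw [← Spec.map_comp]
  rfl

theorem ProjSpace.exists_mem_opensRange_chartι (k : Type u) [Field k] (N : ℕ) (x : ProjSpace k N) :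
    ∃ i : Fin (N + 1), x ∈ (ProjSpace.chartι k N i).opensRange := by
  let 𝒜 := MvPolynomial.homogeneousSubmodule (Fin (N + 1)) k
  have : ⨆ i, Proj.basicOpen 𝒜 (MvPolynomial.X i) = ⊤ := by
    refine Proj.iSup_basicOpen_eq_top' 𝒜 _
      (fun i => ⟨1, MvPolynomial.X_mem_homogeneousSubmodule k i⟩) ?_
    rw [eq_top_iff]
    intro p _
    induction p using MvPolynomial.induction_on with
    | C c => exact (Algebra.adjoin (𝒜 0) _).algebraMap_mem ⟨_, MvPolynomial.isHomogeneous_C _ c⟩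
    | add p q hp hq => exact add_mem (hp trivial) (hq trivial)
    | mul_X p i hp => exact mul_mem (hp trivial) (Algebra.subset_adjoin ⟨i, rfl⟩)
  obtain ⟨i, hi⟩ := TopologicalSpace.Opens.mem_iSup.mp (this.ge (Set.mem_univ x))
  refine ⟨i, ?_⟩
  rw [← Proj.opensRange_awayι 𝒜 _ (MvPolynomial.X_mem_homogeneousSubmodule k i) one_pos] at hi
  exact hi

theorem exists_extension_to_Spec {T Z : Scheme.{u}} {k A : CommRingCat.{u}} (c : k ⟶ A)
    (i : T ⟶ Z) (t : T ⟶ Spec A) (s : Z ⟶ Spec k) (h : t ≫ Spec.map c = i ≫ s)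
    (H : ∀ (φ : A ⟶ Γ(T, ⊤)) (τ : k ⟶ Γ(Z, ⊤)), τ ≫ i.appTop = c ≫ φ →
      ∃ ψ : A ⟶ Γ(Z, ⊤), ψ ≫ i.appTop = φ ∧ c ≫ ψ = τ) :
    ∃ e : Z ⟶ Spec A, i ≫ e = t ∧ e ≫ Spec.map c = s := by
  have key : ∀ {X : Scheme.{u}} {R : CommRingCat.{u}} (f : X ⟶ Spec R),
      X.toSpecΓ ≫ Spec.map ((Scheme.ΓSpecIso R).inv ≫ f.appTop) = f := by
    intro X R f
    rw [Spec.map_comp, ← Scheme.toSpecΓ_naturality_assoc]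
    simp
  obtain ⟨ψ, h₁, h₂⟩ := H ((Scheme.ΓSpecIso A).inv ≫ t.appTop)
    ((Scheme.ΓSpecIso k).inv ≫ s.appTop) (by
      rw [Category.assoc, ← Scheme.Hom.comp_appTop, ← h, Scheme.Hom.comp_appTop,
        Scheme.ΓSpecIso_inv_naturality_assoc])
  refine ⟨Z.toSpecΓ ≫ Spec.map ψ, ?_, ?_⟩
  · rw [Scheme.toSpecΓ_naturality_assoc, ← Spec.map_comp, h₁, key]
  · rw [Category.assoc, ← Spec.map_comp, h₂, key]

/-- A `k`-morphism into a standard chart of projective space extends from a closed subscheme of an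
affine `k`-scheme to the whole scheme. -/
theorem ProjSpace.exists_extension {k : Type u} [Field k] {N : ℕ} {T Z : Scheme.{u}} [IsAffine Z]
    (i : T ⟶ Z) [IsClosedImmersion i] (s : Z ⟶ Spec (CommRingCat.of k)) (t : T ⟶ ProjSpace k N)
    (h : t ≫ ProjSpace.structMap k N = i ≫ s) (l : Fin (N + 1))
    (hl : Set.range t ⊆ Set.range (ProjSpace.chartι k N l)) :
    ∃ e : Z ⟶ ProjSpace k N, i ≫ e = t ∧ e ≫ ProjSpace.structMap k N = s := by
  obtain ⟨e, h₁, h₂⟩ := exists_extension_to_Spec (CommRingCat.ofHom (ProjSpace.awayC k N l)) i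
    (IsOpenImmersion.lift (ProjSpace.chartι k N l) t hl) s
    (by rw [← ProjSpace.chartι_structMap, IsOpenImmersion.lift_fac_assoc, h]) (by
      intro φ τ hτ
      obtain ⟨ψ, h₁, h₂⟩ := ProjSpace.exists_lift_away k N l i.appTop.hom
        (IsClosedImmersion.isAffine_surjective_of_isAffine i).2 φ.hom τ.hom
        (congrArg CommRingCat.Hom.hom hτ)
      exact ⟨CommRingCat.ofHom ψ, CommRingCat.hom_ext h₁, CommRingCat.hom_ext h₂⟩)
  refine ⟨e ≫ ProjSpace.chartι k N l, ?_, ?_⟩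
  · rw [reassoc_of% h₁, IsOpenImmersion.lift_fac]
  · rw [Category.assoc, ProjSpace.chartι_structMap, h₂]

/-- To check that `g ∘ f` is the identity as a rational map, it suffices to do so after
restricting along an open immersion with nonempty source. -/
theorem AlgebraicGeometry.Scheme.PartialMap.compEqId_of_isOpenImmersion {X Y T : Scheme.{u}}
    [IrreducibleSpace X] [Nonempty T] (f : X.PartialMap Y) (g : Y.PartialMap X) (r : T ⟶ X)
    [IsOpenImmersion r] (a : T ⟶ f.domain) (ha : a ≫ f.domain.ι = r) (m : T ⟶ g.domain)
    (h₁ : m ≫ g.domain.ι = a ≫ f.hom) (h₂ : m ≫ g.hom = r) : f.CompEqId g := by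
  have hle : r.opensRange ≤ f.domain := by
    rintro _ ⟨x, rfl⟩
    rw [← ha]
    exact (a x).2
  refine ⟨r.opensRange, r.opensRange.isOpen.dense (Set.range_nonempty r), hle,
    r.isoOpensRange.inv ≫ m, ?_, ?_⟩
  · rw [← cancel_epi r.isoOpensRange.hom]
    have : r.isoOpensRange.hom ≫ X.homOfLE hle = a := by
      rw [← cancel_mono f.domain.ι, ha]
      simp
    simp [reassoc_of% this, h₁]
  · rw [← cancel_epi r.isoOpensRange.hom]
    simp [h₂]

/-- **Lemma 1 (Schreieder, Geometric retract rationality of norm varieties).**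
Let `k` be a field and let `Y` be a retract rational `k`-variety.  Then any generically
injective rational map `f : Y ⇢ ℙ^N` admits a rational section, i.e. there is a rational
map `g : ℙ^N ⇢ Y` over `k` such that `g ∘ f` is defined and coincides with the identity
as a rational map. -/
theorem retract_rational_section_of_genericallyInjective
    (k : Type u) [Field k] (Y : Scheme.{u}) (sY : Y ⟶ Spec (CommRingCat.of k))
    [IsIntegral Y] [LocallyOfFiniteType sY] [QuasiCompact sY] [IsSeparated sY]
    (hY : IsRetractRational k Y sY) (N : ℕ)
    (f : Y.PartialMap (ProjSpace k N))
    (hf : f.IsOverStruct sY (ProjSpace.structMap k N))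
    (hinj : f.GenericallyInjective) :
    ∃ g : (ProjSpace k N).PartialMap Y,
      g.IsOverStruct (ProjSpace.structMap k N) sY ∧ f.CompEqId g := by
  obtain ⟨M, -, f₀, g₀, hf₀, hg₀, U₀, hU₀, hle₀, lift₀, hl₁, hl₂⟩ := hY
  obtain ⟨U, hU, hle, V, -, h, hh, hcl⟩ := hinj
  have := ProjSpace.irreducibleSpace k N
  obtain ⟨y, hyU₀, hyU⟩ := hU.inter_open_nonempty _ U₀.isOpen hU₀.nonempty
  let φ : (U₀ : Scheme.{u}) ⟶ ProjSpace k M := Y.homOfLE hle₀ ≫ f₀.hom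
  obtain ⟨l, hl⟩ := ProjSpace.exists_mem_opensRange_chartι k M (φ ⟨y, hyU₀⟩)
  let W : Y.Opens := U₀.ι ''ᵁ (φ ⁻¹ᵁ (ProjSpace.chartι k M l).opensRange)
  have hyW : y ∈ W := ⟨⟨y, hyU₀⟩, hl, rfl⟩
  obtain ⟨V₁, hV₁, hV₁W⟩ := h.isClosedEmbedding.isInducing.isOpen_iff.mp (U.ι ⁻¹ᵁ W).isOpen
  have hyV₁ : (⟨y, hyU⟩ : U) ∈ h ⁻¹' V₁ := hV₁W ▸ hyW
  obtain ⟨V₂, hV₂, hyV₂, hV₂V₁⟩ : ∃ V₂ : V.toScheme.Opens,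
      IsAffineOpen V₂ ∧ h ⟨y, hyU⟩ ∈ V₂ ∧ (V₂ : Set V.toScheme) ⊆ V₁ := by
    obtain ⟨_, ⟨V₂, hV₂, rfl⟩, hyV₂, hV₂V₁⟩ :=
      (Scheme.isBasis_affineOpens V.toScheme).exists_subset_of_mem_open hyV₁ hV₁
    exact ⟨V₂, hV₂, hyV₂, hV₂V₁⟩
  have : IsAffine V₂ := hV₂
  have : Nonempty (h ⁻¹ᵁ V₂ : Scheme.{u}) := ⟨⟨⟨y, hyU⟩, hyV₂⟩⟩
  let r : (h ⁻¹ᵁ V₂ : Scheme.{u}) ⟶ Y := (h ⁻¹ᵁ V₂).ι ≫ U.ι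
  have hrW : ∀ x, r x ∈ W := fun x =>
    (hV₁W ▸ hV₂V₁ x.2 : x.1 ∈ ((U.ι ⁻¹ᵁ W : U.toScheme.Opens) : Set U))
  have hrU₀ : Set.range r ⊆ Set.range U₀.ι := by
    rintro _ ⟨x, rfl⟩
    obtain ⟨z, -, hz⟩ := hrW x
    exact ⟨z, hz⟩
  let q := IsOpenImmersion.lift U₀.ι r hrU₀
  have hq : q ≫ U₀.ι = r := IsOpenImmersion.lift_fac _ _ _
  have hqφ : Set.range (q ≫ φ) ⊆ Set.range (ProjSpace.chartι k M l) := by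
    rintro _ ⟨x, rfl⟩
    obtain ⟨z, hz, hzx⟩ := hrW x
    have : q x = z := U₀.ι.isOpenEmbedding.injective <|
      (Scheme.Hom.comp_apply q U₀.ι x).symm.trans ((by rw [hq] : _ = r x).trans hzx.symm)
    rw [Scheme.Hom.comp_apply, this]
    exact hz
  obtain ⟨e, he₁, he₂⟩ := ProjSpace.exists_extension (h ∣_ V₂)
    (V₂.ι ≫ V.ι ≫ ProjSpace.structMap k N) (q ≫ φ) (by
      rw [morphismRestrict_ι_assoc, reassoc_of% hh, hf]
      simp only [φ, Category.assoc]
      rw [hf₀]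
      simp only [Scheme.homOfLE_ι_assoc, reassoc_of% hq]
      simp only [r, Category.assoc]) l hqφ
  have hqe : (h ∣_ V₂) ≫ e = (q ≫ lift₀) ≫ g₀.domain.ι := by
    rw [he₁, Category.assoc, hl₁]
  let E := e ⁻¹ᵁ g₀.domain
  have hE : Set.range (h ∣_ V₂) ⊆ Set.range E.ι := by
    rintro _ ⟨x, rfl⟩
    rw [Scheme.Opens.range_ι]
    change ((h ∣_ V₂) ≫ e) x ∈ g₀.domain
    rw [hqe]
    exact ((q ≫ lift₀) x).2
  let m := IsOpenImmersion.lift E.ι (h ∣_ V₂) hE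
  have hm : m ≫ E.ι = h ∣_ V₂ := IsOpenImmersion.lift_fac _ _ _
  have hme : m ≫ (e ∣_ g₀.domain) = q ≫ lift₀ := by
    rw [← cancel_mono g₀.domain.ι, Category.assoc, morphismRestrict_ι, reassoc_of% hm, hqe]
  let j := E.ι ≫ V₂.ι ≫ V.ι
  have : Nonempty (E : Scheme.{u}) := ‹Nonempty (h ⁻¹ᵁ V₂ : Scheme.{u})›.map m
  let g : (ProjSpace k N).PartialMap Y :=
    ⟨j.opensRange, j.opensRange.isOpen.dense (Set.range_nonempty j),
      j.isoOpensRange.inv ≫ (e ∣_ g₀.domain) ≫ g₀.hom⟩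
  refine ⟨g, ?_, ?_⟩
  · change (j.isoOpensRange.inv ≫ (e ∣_ g₀.domain) ≫ g₀.hom) ≫ sY = j.opensRange.ι ≫ _
    rw [← cancel_epi j.isoOpensRange.hom, Category.assoc, Category.assoc, hg₀,
      Iso.hom_inv_id_assoc, morphismRestrict_ι_assoc, he₂, Scheme.Hom.isoOpensRange_hom_ι_assoc]
    simp [j, E]
  · refine f.compEqId_of_isOpenImmersion g r ((h ⁻¹ᵁ V₂).ι ≫ Y.homOfLE hle) (by simp [r])
      (m ≫ j.isoOpensRange.hom) ?_ ?_
    · change _ ≫ j.opensRange.ι = _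
      rw [Category.assoc, Scheme.Hom.isoOpensRange_hom_ι, Category.assoc, ← hh,
        ← morphismRestrict_ι_assoc, ← hm, Category.assoc]
    · change _ ≫ j.isoOpensRange.inv ≫ _ = _
      rw [Category.assoc, Iso.hom_inv_id_assoc, reassoc_of% hme, hl₂, hq]
end

section
/- Let k be a field and let Y be a retract rational k-variety. Then there exists a rational map Y ⇢ P^{dim Y + 1} which admits a rational section, i.e. a rational map g : P^{dim Y + 1} ⇢ Y such that the composition g ∘ f is defined and coincides with the identity as a rational map. -/
open AlgebraicGeometry CategoryTheory CategoryTheory.Limits TopologicalSpace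

universe u

attribute [local instance] MvPolynomial.gradedAlgebra

theorem MvPolynomial.linearIndependent_map {k F σ ι : Type*} [Field k] [Field F] (φ : k →+* F)
    {q : ι → MvPolynomial σ k} (hq : LinearIndependent k q) :
    LinearIndependent F fun i ↦ MvPolynomial.map φ (q i) := by
  let := φ.toAlgebra
  rw [linearIndependent_iff'] at hq ⊢
  intro s c hc i hi
  rw [← Module.forall_dual_apply_eq_zero_iff k]
  intro l
  refine hq s (fun i ↦ l (c i)) ?_ i hi
  ext m
  have h := congrArg (fun r ↦ l (MvPolynomial.coeff m r)) hc
  simp only [MvPolynomial.coeff_sum, MvPolynomial.coeff_smul, MvPolynomial.coeff_map,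
    smul_eq_mul, MvPolynomial.coeff_zero, map_zero, map_sum] at h ⊢
  rw [← h]
  refine Finset.sum_congr rfl fun j _ ↦ ?_
  rw [mul_comm (c j), ← RingHom.algebraMap_toAlgebra φ, ← Algebra.smul_def, map_smul, smul_eq_mul,
    mul_comm]

theorem MvPolynomial.linearIndependent_pow {k σ ι : Type*} [Field k] (p : ℕ) [Fact p.Prime]
    [CharP k p] {q : ι → MvPolynomial σ k} (hq : LinearIndependent k q) :
    LinearIndependent k fun i ↦ q i ^ p := by
  have h := (MvPolynomial.linearIndependent_map (frobenius k p) hq).map'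
    (MvPolynomial.expand p : MvPolynomial σ k →ₐ[k] _).toLinearMap (LinearMap.ker_eq_bot.2
      (MvPolynomial.expand_injective (Fact.out : p.Prime).pos))
  have e : (fun i ↦ q i ^ p) = (MvPolynomial.expand p : MvPolynomial σ k →ₐ[k] _).toLinearMap ∘
      fun i ↦ MvPolynomial.map (frobenius k p) (q i) := by
    ext1 i
    rw [← MvPolynomial.map_frobenius_expand p, MvPolynomial.map_expand]
    rfl
  rw [e]
  exact h

theorem linearIndepOn_pow_of_algHom_fractionRing {k K σ : Type*} [Field k] [Field K] [Algebra k K]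
    (j : K →ₐ[k] FractionRing (MvPolynomial σ k)) (p : ℕ) [Fact p.Prime] [CharP k p]
    (s : Finset K) (hs : LinearIndepOn k _root_.id (s : Set K)) :
    LinearIndepOn k (· ^ p) (s : Set K) := by
  classical
  let L := FractionRing (MvPolynomial σ k)
  have hs' : LinearIndependent k fun x : (s : Set K) ↦ j x :=
    LinearIndependent.map' hs j.toLinearMap (LinearMap.ker_eq_bot.2 j.injective)
  obtain ⟨D, hD⟩ := IsLocalization.exist_integer_multiples_of_finset
    (nonZeroDivisors (MvPolynomial σ k)) (s.image j)
  choose! q hq using fun x (hx : x ∈ s) ↦ hD (j x) (Finset.mem_image_of_mem j hx)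
  let d : L := algebraMap (MvPolynomial σ k) L D
  have hd : d ≠ 0 := IsLocalization.to_map_ne_zero_of_mem_nonZeroDivisors L le_rfl D.2
  have hq' (x : (s : Set K)) : algebraMap (MvPolynomial σ k) L (q x) = d * j x := by
    rw [hq x x.2, Algebra.smul_def]
  have hqi : LinearIndependent k fun x : (s : Set K) ↦ q x := by
    refine LinearIndependent.of_comp
      (IsScalarTower.toAlgHom k (MvPolynomial σ k) L).toLinearMap ?_
    have e : (IsScalarTower.toAlgHom k (MvPolynomial σ k) L).toLinearMap ∘
        (fun x : (s : Set K) ↦ q x) = LinearMap.mulLeft k d ∘ fun x : (s : Set K) ↦ j x :=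
      funext hq'
    rw [e]
    exact hs'.map' (LinearMap.mulLeft k d) (LinearMap.ker_eq_bot.2 (mul_right_injective₀ hd))
  have hqp := (MvPolynomial.linearIndependent_pow p hqi).map'
    (IsScalarTower.toAlgHom k (MvPolynomial σ k) L).toLinearMap
    (LinearMap.ker_eq_bot.2 (IsFractionRing.injective _ _))
  refine LinearIndependent.of_comp
    (LinearMap.mulLeft k (d ^ p) ∘ₗ j.toLinearMap) ?_
  have e : (LinearMap.mulLeft k (d ^ p) ∘ₗ j.toLinearMap) ∘ (fun x : (s : Set K) ↦ (x : K) ^ p) =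
      (IsScalarTower.toAlgHom k (MvPolynomial σ k) L).toLinearMap ∘
        fun x : (s : Set K) ↦ q x ^ p := by
    ext1 x
    simp only [Function.comp_apply, LinearMap.coe_comp, LinearMap.mulLeft_apply,
      AlgHom.toLinearMap_apply, map_pow, IsScalarTower.coe_toAlgHom', ← mul_pow, hq']
  rw [e]
  exact hqp

theorem exists_adjoin_range_eq_top_of_algHom_fractionRing {k K σ : Type*} [Field k] [Field K]
    [Algebra k K] [Algebra.EssFiniteType k K] (j : K →ₐ[k] FractionRing (MvPolynomial σ k)) (d : ℕ)
    (hd : ∀ s : Finset K, IsTranscendenceBasis k ((↑) : s → K) → s.card ≤ d) :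
    ∃ θ : Fin (d + 1) → K, IntermediateField.adjoin k (Set.range θ) = ⊤ := by
  classical
  obtain ⟨s, hs, hsep⟩ : ∃ s : Finset K, IsTranscendenceBasis k ((↑) : s → K) ∧
      Algebra.IsSeparable (IntermediateField.adjoin k (s : Set K)) K := by
    obtain _ | ⟨p, hp, hpk⟩ := CharP.exists' k
    · exact exists_isTranscendenceBasis_and_isSeparable_of_perfectField k K
    · have := ExpChar.prime (R := k) hp.out
      exact exists_isTranscendenceBasis_and_isSeparable_of_linearIndepOn_pow_of_essFiniteType p
        hp.out (fun s ↦ linearIndepOn_pow_of_algHom_fractionRing j p s)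
  have : Algebra.EssFiniteType (IntermediateField.adjoin k (s : Set K)) K := .of_comp k _ _
  have : Algebra.FormallyUnramified (IntermediateField.adjoin k (s : Set K)) K :=
    (Algebra.FormallyUnramified.iff_isSeparable _ _).2 hsep
  have : Module.Finite (IntermediateField.adjoin k (s : Set K)) K :=
    Algebra.FormallyUnramified.finite_of_free _ _
  obtain ⟨α, hα⟩ := Field.exists_primitive_element (IntermediateField.adjoin k (s : Set K)) K
  have hcard : (insert α s).card ≤ d + 1 :=
    (Finset.card_insert_le _ _).trans (Nat.succ_le_succ (hd s hs))
  have : Nonempty (insert α s : Finset K) := ⟨⟨α, Finset.mem_insert_self _ _⟩⟩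
  obtain ⟨e⟩ := Function.Embedding.nonempty_of_card_le (α := (insert α s : Finset K))
    (β := Fin (d + 1)) (by simpa using hcard)
  refine ⟨fun i ↦ (Function.invFun e i : (insert α s : Finset K)), ?_⟩
  have hr : Set.range (fun i ↦ ((Function.invFun e i : (insert α s : Finset K)) : K)) =
      (s : Set K) ∪ {α} := by
    rw [Set.range_comp' Subtype.val, (Function.invFun_surjective e.injective).range_eq]
    ext; simp
  rw [hr, ← IntermediateField.adjoin_adjoin_left, hα, IntermediateField.restrictScalars_top]

theorem ringKrullDim_le_of_isIntegral_of_injective {R S : Type*} [CommRing R] [CommRing S]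
    [IsDomain S] [Algebra R S] [FaithfulSMul R S] [Algebra.IsIntegral R S] :
    ringKrullDim R ≤ ringKrullDim S := by
  refine iSup_le fun l ↦ ?_
  obtain ⟨P, hP, hPl⟩ := Ideal.exists_ideal_over_prime_of_isIntegral_of_isDomain (S := S)
    (RelSeries.head l).asIdeal (by
      rw [(RingHom.injective_iff_ker_eq_bot _).1 (FaithfulSMul.algebraMap_injective R S)]
      exact bot_le)
  have : P.LiesOver (RelSeries.head l).asIdeal := ⟨hPl.symm⟩
  obtain ⟨l', hl', -⟩ := Ideal.exists_ltSeries_of_hasGoingUp l P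
  rw [← hl']
  exact Order.LTSeries.length_le_krullDim l'

theorem trdeg_fractionRing_le_ringKrullDim (k B : Type*) (K : Type*) [Field k] [CommRing B]
    [IsDomain B] [Field K] [Algebra k B] [Algebra B K] [Algebra k K] [IsScalarTower k B K]
    [IsFractionRing B K] [Algebra.FiniteType k B] {s : Finset K}
    (hs : IsTranscendenceBasis k ((↑) : s → K)) : (s.card : WithBot ℕ∞) ≤ ringKrullDim B := by
  obtain ⟨n, g, hg, hg'⟩ := exists_integral_inj_algHom_of_fg k B
  algebraize [g.toRingHom]
  have : FaithfulSMul (MvPolynomial (Fin n) k) B :=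
    (faithfulSMul_iff_algebraMap_injective _ _).2 hg
  have : IsScalarTower k (MvPolynomial (Fin n) k) B := .of_algebraMap_eq' g.comp_algebraMap.symm
  have h1 := ringKrullDim_le_of_isIntegral_of_injective (R := MvPolynomial (Fin n) k) (S := B)
  let _ : Algebra (MvPolynomial (Fin n) k) K := ((algebraMap B K).comp (algebraMap _ B)).toAlgebra
  have : IsScalarTower (MvPolynomial (Fin n) k) B K := .of_algebraMap_eq' rfl
  have : IsScalarTower k (MvPolynomial (Fin n) k) K := .to₁₂₄ _ _ B _
  have : FaithfulSMul (MvPolynomial (Fin n) k) K :=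
    (faithfulSMul_iff_algebraMap_injective _ _).2
      ((IsFractionRing.injective B K).comp hg)
  have : Algebra.IsAlgebraic B K := IsLocalization.isAlgebraic K (nonZeroDivisors B)
  have : Algebra.IsAlgebraic (MvPolynomial (Fin n) k) K :=
    .trans _ B _
  have h2 := lift_trdeg_add_eq k (MvPolynomial (Fin n) k) K
  rw [← hs.cardinalMk_eq_trdeg, MvPolynomial.trdeg_of_isDomain, trdeg_eq_zero] at h2
  simp at h2
  rw [MvPolynomial.ringKrullDim_of_isNoetherianRing] at h1
  simpa [← h2] using h1

theorem MvPolynomial.IsHomogeneous.pow_mul_eval₂ {σ R A : Type*} [Fintype σ] [CommSemiring R]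
    [CommSemiring A] {p : MvPolynomial σ R} {n : ℕ} (hp : p.IsHomogeneous n) (g : R →+* A)
    (y : σ → A) (t : A) : t ^ n * p.eval₂ g y = p.eval₂ g (fun j ↦ t * y j) := by
  rw [MvPolynomial.eval₂_eq', MvPolynomial.eval₂_eq', Finset.mul_sum]
  refine Finset.sum_congr rfl fun d hd ↦ ?_
  have h := hp (MvPolynomial.mem_support_iff.1 hd)
  have h : ∑ i, d i = n := by
    rw [← h]
    simp [Finsupp.weight_apply, Finsupp.sum_fintype]
  simp_rw [mul_pow]
  rw [Finset.prod_mul_distrib, Finset.prod_pow_eq_pow_sum, h]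
  ring

namespace ProjSpace

variable (k : Type u) [Field k] (N : ℕ) (i : Fin (N + 1))

/-- The coordinate ring of the standard affine chart `X i ≠ 0` of `ℙ^N`. -/
abbrev ChartRing : Type u :=
  HomogeneousLocalization.Away (MvPolynomial.homogeneousSubmodule (Fin (N + 1)) k)
    (MvPolynomial.X i)

/-- The inclusion of the constants in the coordinate ring of a chart. -/
noncomputable def chartC : k →+* ChartRing k N i :=
  (HomogeneousLocalization.fromZeroRingHom
    (MvPolynomial.homogeneousSubmodule (Fin (N + 1)) k) _).comp
    ((GradedRing.projZeroRingHom' (MvPolynomial.homogeneousSubmodule (Fin (N + 1)) k)).comp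
      MvPolynomial.C)

theorem X_mem (j : Fin (N + 1)) :
    (MvPolynomial.X j : MvPolynomial (Fin (N + 1)) k) ∈
      MvPolynomial.homogeneousSubmodule (Fin (N + 1)) k 1 :=
  MvPolynomial.isHomogeneous_X _ _

/-- The standard affine chart `X i ≠ 0` of `ℙ^N`. -/
noncomputable def chart : Spec (CommRingCat.of (ChartRing k N i)) ⟶ ProjSpace k N :=
  Proj.awayι (MvPolynomial.homogeneousSubmodule (Fin (N + 1)) k) (MvPolynomial.X i)
    (X_mem k N i) one_pos

instance : IsOpenImmersion (chart k N i) :=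
  inferInstanceAs (IsOpenImmersion (Proj.awayι
    (MvPolynomial.homogeneousSubmodule (Fin (N + 1)) k) (MvPolynomial.X i)
    (X_mem k N i) one_pos))

theorem chart_structMap :
    chart k N i ≫ structMap k N = Spec.map (CommRingCat.ofHom (chartC k N i)) := by
  have h (R : CommRingCat.{u}) (φ : R ⟶ CommRingCat.of
      (MvPolynomial.homogeneousSubmodule (Fin (N + 1)) k 0)) :
      Proj.awayι (MvPolynomial.homogeneousSubmodule (Fin (N + 1)) k) (MvPolynomial.X i)
        (X_mem k N i) one_pos ≫ Proj.toSpecZero _ ≫ Spec.map φ =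
      Spec.map (φ ≫ CommRingCat.ofHom (HomogeneousLocalization.fromZeroRingHom _ _)) := by
    rw [Proj.awayι_toSpecZero_assoc, ← Spec.map_comp]
  exact h _ _

theorem exists_mem_opensRange_chart (x : ProjSpace k N) : ∃ i, x ∈ (chart k N i).opensRange := by
  have h : ⨆ i, Proj.basicOpen (MvPolynomial.homogeneousSubmodule (Fin (N + 1)) k)
      (MvPolynomial.X i) = ⊤ := by
    refine Proj.iSup_basicOpen_eq_top' _ _ (fun i ↦ ⟨_, X_mem k N i⟩) (top_le_iff.1 ?_)
    rintro p -
    induction p using MvPolynomial.induction_on with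
    | C a =>
      exact Subalgebra.algebraMap_mem (Algebra.adjoin _ _)
        (⟨MvPolynomial.C a, MvPolynomial.isHomogeneous_C _ _⟩ :
          MvPolynomial.homogeneousSubmodule (Fin (N + 1)) k 0)
    | add p q hp hq => exact add_mem hp hq
    | mul_X p j hp => exact mul_mem hp (Algebra.subset_adjoin ⟨j, rfl⟩)
  obtain ⟨i, hi⟩ := Opens.mem_iSup.1 (h.symm ▸ trivial :
    x ∈ ⨆ i, Proj.basicOpen (MvPolynomial.homogeneousSubmodule (Fin (N + 1)) k)
      (MvPolynomial.X i))
  refine ⟨i, ?_⟩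
  rw [← Proj.opensRange_awayι _ _ (X_mem k N i) one_pos] at hi
  exact hi

/-- The coordinate `X j / X i` on the chart `X i ≠ 0`. -/
noncomputable def chartX (j : Fin (N + 1)) : ChartRing k N i :=
  HomogeneousLocalization.Away.mk _ (X_mem k N i) 1 (MvPolynomial.X j) (by simpa using X_mem k N j)

/-- Polynomials as functions on the chart `X i ≠ 0`. -/
noncomputable def ofMvPolynomial : MvPolynomial (Fin (N + 1)) k →+* ChartRing k N i :=
  MvPolynomial.eval₂Hom (chartC k N i) (chartX k N i)

theorem val_chartC (c : k) : (chartC k N i c).val = algebraMap (MvPolynomial (Fin (N + 1)) k)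
    (Localization.Away (MvPolynomial.X i : MvPolynomial (Fin (N + 1)) k))
      (MvPolynomial.C c) := by
  have h : ((GradedRing.projZeroRingHom' (MvPolynomial.homogeneousSubmodule (Fin (N + 1)) k)
      (MvPolynomial.C c) : MvPolynomial.homogeneousSubmodule (Fin (N + 1)) k 0) :
        MvPolynomial (Fin (N + 1)) k) = MvPolynomial.C c :=
    congrArg Subtype.val (GradedRing.projZeroRingHom'_apply_coe
      (MvPolynomial.homogeneousSubmodule (Fin (N + 1)) k)
      ⟨MvPolynomial.C c, MvPolynomial.isHomogeneous_C _ _⟩)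
  rw [← Localization.mk_one_eq_algebraMap]
  exact congrArg (fun p ↦ Localization.mk p 1) h

theorem val_chartX (j : Fin (N + 1)) : (chartX k N i j).val = Localization.mk
    (MvPolynomial.X j : MvPolynomial (Fin (N + 1)) k)
    (⟨MvPolynomial.X i ^ 1, 1, rfl⟩ : Submonoid.powers (MvPolynomial.X i)) :=
  rfl

theorem algebraMap_X_mul_val_chartX (j : Fin (N + 1)) :
    algebraMap (MvPolynomial (Fin (N + 1)) k)
      (Localization.Away (MvPolynomial.X i : MvPolynomial (Fin (N + 1)) k)) (MvPolynomial.X i) *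
      (chartX k N i j).val = algebraMap (MvPolynomial (Fin (N + 1)) k) _ (MvPolynomial.X j) := by
  rw [val_chartX, Localization.mk_eq_mk', IsLocalization.mul_mk'_eq_mk'_of_mul,
    IsLocalization.mk'_eq_iff_eq_mul, ← map_mul]
  simp [mul_comm]

theorem val_ofMvPolynomial {n : ℕ} (p : MvPolynomial (Fin (N + 1)) k) (hp : p.IsHomogeneous n) :
    (ofMvPolynomial k N i p).val = Localization.mk p
      (⟨MvPolynomial.X i ^ n, n, rfl⟩ : Submonoid.powers (MvPolynomial.X i)) := by
  let L := Localization.Away (MvPolynomial.X i : MvPolynomial (Fin (N + 1)) k)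
  let v : ChartRing k N i →+* L := algebraMap _ _
  let a : MvPolynomial (Fin (N + 1)) k →+* L := algebraMap _ _
  have hX (j : Fin (N + 1)) : a (MvPolynomial.X i) * v (chartX k N i j) = a (MvPolynomial.X j) :=
    algebraMap_X_mul_val_chartX k N i j
  have hC : v.comp (chartC k N i) = a.comp MvPolynomial.C := RingHom.ext (val_chartC k N i)
  have h := hp.pow_mul_eval₂ (v.comp (chartC k N i)) (fun j ↦ v (chartX k N i j))
    (a (MvPolynomial.X i))
  have h1 : v (ofMvPolynomial k N i p) = MvPolynomial.eval₂ (v.comp (chartC k N i))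
      (fun j ↦ v (chartX k N i j)) p := MvPolynomial.hom_eval₂ p (chartC k N i) v _
  have h2 : MvPolynomial.eval₂ (a.comp MvPolynomial.C) (fun j ↦ a (MvPolynomial.X j)) p = a p := by
    rw [← MvPolynomial.hom_eval₂, MvPolynomial.eval₂_eta]
  simp_rw [hX] at h
  rw [← h1, hC, h2, ← map_pow, mul_comm] at h
  rw [Localization.mk_eq_mk']
  exact IsLocalization.eq_mk'_iff_mul_eq.2 h

theorem ofMvPolynomial_surjective : Function.Surjective (ofMvPolynomial k N i) := by
  intro x
  obtain ⟨n, p, hp, rfl⟩ := HomogeneousLocalization.Away.mk_surjective _ (X_mem k N i) x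
  refine ⟨p, HomogeneousLocalization.val_injective _ ?_⟩
  rw [val_ofMvPolynomial k N i p (by simpa using hp)]
  rfl

variable {k N i}

theorem chartRing_ringHom_ext {A : Type*} [CommRing A] {φ ψ : ChartRing k N i →+* A}
    (hC : φ.comp (chartC k N i) = ψ.comp (chartC k N i))
    (hX : ∀ j, φ (chartX k N i j) = ψ (chartX k N i j)) : φ = ψ := by
  refine (RingHom.cancel_right (ofMvPolynomial_surjective k N i)).1 ?_
  refine MvPolynomial.ringHom_ext (fun c ↦ ?_) fun j ↦ ?_
  · simpa [ofMvPolynomial] using RingHom.congr_fun hC c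
  · simpa [ofMvPolynomial] using hX j

theorem exists_chartRing_ringHom {A : Type*} [CommRing A] (g : k →+* A) (b : Fin (N + 1) → A)
    (hb : b i = 1) : ∃ φ : ChartRing k N i →+* A,
      φ.comp (chartC k N i) = g ∧ ∀ j, φ (chartX k N i j) = b j := by
  have hu : IsUnit (MvPolynomial.eval₂Hom g b (MvPolynomial.X i)) := by simp [hb]
  let ψ := IsLocalization.Away.lift (S := Localization.Away
    (MvPolynomial.X i : MvPolynomial (Fin (N + 1)) k)) _ hu
  refine ⟨ψ.comp (algebraMap (ChartRing k N i) _), ?_, fun j ↦ ?_⟩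
  · ext c
    refine (congrArg ψ (val_chartC k N i c)).trans ?_
    simp [ψ]
  · have h := congrArg ψ (algebraMap_X_mul_val_chartX k N i j)
    simpa [ψ, hb] using h

variable (k N i)

theorem exists_injective_chartRing_ringHom_fractionRing :
    ∃ φ : ChartRing k N i →+* FractionRing (MvPolynomial (Fin (N + 1)) k),
      Function.Injective φ ∧ φ.comp (chartC k N i) = algebraMap k _ := by
  have hX : (MvPolynomial.X i : MvPolynomial (Fin (N + 1)) k) ∈ nonZeroDivisors _ :=
    mem_nonZeroDivisors_of_ne_zero (MvPolynomial.X_ne_zero i)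
  let ψ := IsLocalization.Away.lift (S := Localization.Away
    (MvPolynomial.X i : MvPolynomial (Fin (N + 1)) k))
    (g := algebraMap _ (FractionRing (MvPolynomial (Fin (N + 1)) k))) (MvPolynomial.X i)
      (IsLocalization.map_units _ ⟨_, hX⟩)
  refine ⟨ψ.comp (algebraMap (ChartRing k N i) _), ?_, ?_⟩
  · have hψ : Function.Injective ψ := (IsLocalization.lift_injective_iff _).2 fun x y ↦
      ((IsLocalization.injective _ (Submonoid.powers_le.2 hX)).eq_iff.trans
        (IsFractionRing.injective (MvPolynomial (Fin (N + 1)) k)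
          (FractionRing (MvPolynomial (Fin (N + 1)) k))).eq_iff.symm)
    exact hψ.comp (HomogeneousLocalization.val_injective _)
  · ext c
    refine (congrArg ψ (val_chartC k N i c)).trans ?_
    simp [ψ, IsScalarTower.algebraMap_apply k (MvPolynomial (Fin (N + 1)) k)
      (FractionRing (MvPolynomial (Fin (N + 1)) k)), MvPolynomial.algebraMap_eq]

instance : IsDomain (ChartRing k N i) :=
  have ⟨φ, hφ, _⟩ := exists_injective_chartRing_ringHom_fractionRing k N i
  hφ.isDomain φ

end ProjSpace

theorem isGermInjectiveAt_of_isIntegral {X : Scheme.{u}} [IsIntegral X] (x : X) :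
    X.IsGermInjectiveAt x :=
  inferInstance

namespace ProjSpace

variable (k : Type u) [Field k] (N : ℕ)

/-- The generic point of `ℙ^N`. -/
noncomputable def zeroPoint :
    ProjectiveSpectrum (MvPolynomial.homogeneousSubmodule (Fin (N + 1)) k) where
  asHomogeneousIdeal := ⊥
  isPrime := by
    rw [HomogeneousIdeal.toIdeal_bot]
    exact Ideal.isPrime_bot
  not_irrelevant_le h := by
    have hX : (MvPolynomial.X 0 : MvPolynomial (Fin (N + 1)) k) ∈
        HomogeneousIdeal.irrelevant (MvPolynomial.homogeneousSubmodule (Fin (N + 1)) k) := by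
      rw [HomogeneousIdeal.mem_irrelevant_iff, GradedRing.proj_apply,
        DirectSum.decompose_of_mem_ne _ (X_mem k N 0) one_ne_zero]
    exact MvPolynomial.X_ne_zero _ (h hX)

theorem irreducibleSpace_projectiveSpectrum : IrreducibleSpace
    (ProjectiveSpectrum (MvPolynomial.homogeneousSubmodule (Fin (N + 1)) k)) := by
  have h : closure {zeroPoint k N} = Set.univ := by
    refine Set.eq_univ_of_forall fun x ↦ ?_
    rw [← ProjectiveSpectrum.le_iff_mem_closure]
    exact (bot_le : ⊥ ≤ x.asHomogeneousIdeal)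
  have h' : IsIrreducible (closure {zeroPoint k N}) := isIrreducible_singleton.closure
  rw [h] at h'
  exact (irreducibleSpace_def _).2 h'

instance : IrreducibleSpace (ProjSpace k N) := irreducibleSpace_projectiveSpectrum k N

instance : (ProjSpace k N).IsGermInjective := by
  intro x
  obtain ⟨i, y, rfl⟩ := exists_mem_opensRange_chart k N x
  have : IsDomain (CommRingCat.of (ChartRing k N i)) := inferInstanceAs (IsDomain (ChartRing k N i))
  have : IsIntegral (Spec (CommRingCat.of (ChartRing k N i))) := inferInstance
  exact isGermInjectiveAt_iff_of_isOpenImmersion.2 (isGermInjectiveAt_of_isIntegral y)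

theorem finiteType_chartC (i : Fin (N + 1)) : (chartC k N i).FiniteType := by
  have h : ((ofMvPolynomial k N i).comp MvPolynomial.C).FiniteType :=
    (RingHom.FiniteType.of_surjective _ (ofMvPolynomial_surjective k N i)).comp
      ((RingHom.finiteType_algebraMap (A := k) (B := MvPolynomial (Fin (N + 1)) k)).2 inferInstance)
  have e : (ofMvPolynomial k N i).comp MvPolynomial.C = chartC k N i := by
    ext c
    simp [ofMvPolynomial]
  rwa [e] at h

instance : LocallyOfFiniteType (structMap k N) := by
  have (i : Fin (N + 1)) : LocallyOfFiniteType (chart k N i ≫ structMap k N) := by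
    rw [chart_structMap, HasRingHomProperty.Spec_iff (P := @LocallyOfFiniteType)]
    exact finiteType_chartC k N i
  have : IsZariskiLocalAtSource @LocallyOfFiniteType.{u} :=
    HasRingHomProperty.instIsZariskiLocalAtSource (Q := RingHom.FiniteType)
  rw [IsZariskiLocalAtSource.iff_of_openCover (P := @LocallyOfFiniteType)
    (Scheme.Cover.mkOfCovers _ _ (chart k N) (exists_mem_opensRange_chart k N)
      fun i ↦ inferInstance)]
  assumption

end ProjSpace

theorem AlgebraicGeometry.Scheme.PartialMap.compEqId_of_fromSpecStalk {X P : Scheme.{u}}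
    [IsIntegral X] (f : X.PartialMap P) (g : P.PartialMap X) {x : X} (hx : x ∈ f.domain)
    (c : Spec (X.presheaf.stalk x) ⟶ (g.domain : Scheme.{u}))
    (hc : c ≫ g.domain.ι = f.fromSpecStalkOfMem hx) (hg : c ≫ g.hom = X.fromSpecStalk x) :
    f.CompEqId g := by
  let D : f.domain.toScheme.Opens := f.hom ⁻¹ᵁ g.domain
  let V : X.Opens := f.domain.ι ''ᵁ D
  have hVf : V ≤ f.domain := (Set.image_subset_range _ _).trans_eq Subtype.range_val
  have hxD : f.hom ⟨x, hx⟩ ∈ g.domain := by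
    have h : (c ≫ g.domain.ι) (IsLocalRing.closedPoint (X.presheaf.stalk x)) ∈ g.domain :=
      (c (IsLocalRing.closedPoint (X.presheaf.stalk x))).2
    rw [hc] at h
    have h2 : (f.domain.fromSpecStalkOfMem x hx) (IsLocalRing.closedPoint (X.presheaf.stalk x)) =
        ⟨x, hx⟩ := by
      apply Subtype.ext
      refine Eq.trans ?_ (Scheme.fromSpecStalk_closedPoint (X := X) (x := x))
      rw [← Scheme.Opens.fromSpecStalkOfMem_ι (U := f.domain) x hx]
      rfl
    rw [← h2]
    exact h
  have hxV : x ∈ V := ⟨⟨x, hx⟩, hxD, rfl⟩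
  have hV : Dense (V : Set X) := V.2.dense ⟨x, hxV⟩
  have hr : Set.range (X.homOfLE hVf ≫ f.hom) ⊆ Set.range g.domain.ι := by
    rintro _ ⟨⟨_, y, hy, rfl⟩, rfl⟩
    rw [Scheme.Opens.range_ι]
    have h : X.homOfLE hVf ⟨f.domain.ι y, y, hy, rfl⟩ = y := Subtype.ext <| by
      refine Eq.trans ?_ (rfl : f.domain.ι y = y.1)
      simp
    exact congrArg f.hom h ▸ hy
  let l := IsOpenImmersion.lift g.domain.ι (X.homOfLE hVf ≫ f.hom) hr
  have hl : l ≫ g.domain.ι = X.homOfLE hVf ≫ f.hom := IsOpenImmersion.lift_fac _ _ _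
  let e : X.PartialMap X := ⟨V, hV, l ≫ g.hom⟩
  have he : e.equiv (PartialMap.id X) := by
    refine equiv_of_fromSpecStalkOfMem_eq (x := x) _ _ hxV trivial ?_
    rw [fromSpecStalkOfMem_toPartialMap, Category.comp_id, ← hg]
    have h : V.fromSpecStalkOfMem x hxV ≫ l = c := by
      rw [← cancel_mono g.domain.ι, Category.assoc, hl, hc,
        ← f.fromSpecStalkOfMem_restrict hV hVf hxV]
      rfl
    rw [← h, Category.assoc]
    rfl
  obtain ⟨W, hW, hWV, hWt, h⟩ := he
  refine ⟨W, hW, hWV.trans hVf, X.homOfLE hWV ≫ l, ?_, ?_⟩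
  · rw [Category.assoc, hl, Scheme.homOfLE_homOfLE_assoc]
  · rw [Category.assoc]
    refine h.trans ?_
    exact (Category.assoc _ _ _).symm.trans ((Category.comp_id _).trans (X.homOfLE_ι hWt))

theorem AlgebraicGeometry.Scheme.PartialMap.exists_compEqId_of_stalk {Y P B : Scheme.{u}}
    [IsIntegral Y] [IrreducibleSpace P] [P.IsGermInjective] (sY : Y ⟶ B) (sP : P ⟶ B)
    [LocallyOfFiniteType sY] [LocallyOfFiniteType sP] {y : Y} {q : P}
    (π : P.presheaf.stalk q ⟶ Y.presheaf.stalk y) (σ : Y.presheaf.stalk y ⟶ P.presheaf.stalk q)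
    (hσπ : σ ≫ π = 𝟙 _)
    (hπ : Spec.map π ≫ P.fromSpecStalk q ≫ sP = Y.fromSpecStalk y ≫ sY)
    (hσ : Spec.map σ ≫ Y.fromSpecStalk y ≫ sY = P.fromSpecStalk q ≫ sP) :
    ∃ (f : Y.PartialMap P) (g : P.PartialMap Y),
      f.IsOverStruct sY sP ∧ g.IsOverStruct sP sY ∧ f.CompEqId g := by
  rw [← Category.assoc] at hπ hσ
  refine ⟨ofFromSpecStalk sY sP _ hπ, ofFromSpecStalk sP sY _ hσ, ofFromSpecStalk_comp _ _ _ _,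
    ofFromSpecStalk_comp _ _ _ _, compEqId_of_fromSpecStalk _ _
      (mem_domain_ofFromSpecStalk _ _ _ _)
      (Spec.map π ≫ Scheme.Opens.fromSpecStalkOfMem _ q (mem_domain_ofFromSpecStalk _ _ _ _))
      ?_ ?_⟩
  · rw [fromSpecStalkOfMem_ofFromSpecStalk, Category.assoc, Scheme.Opens.fromSpecStalkOfMem_ι]
  · have h := fromSpecStalkOfMem_ofFromSpecStalk sP sY _ hσ
    rw [fromSpecStalkOfMem] at h
    rw [Category.assoc, h, ← Spec.map_comp_assoc, hσπ, Spec.map_id, Category.id_comp]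

theorem AlgebraicGeometry.Scheme.PartialMap.CompEqId.exists_stalk {Y P B : Scheme.{u}}
    [IsIntegral Y] {sY : Y ⟶ B} {sP : P ⟶ B} {f : Y.PartialMap P} {g : P.PartialMap Y}
    (h : f.CompEqId g) (hg : g.IsOverStruct sP sY) :
    ∃ (q : P) (π : P.presheaf.stalk q ⟶ Y.presheaf.stalk (genericPoint Y))
      (σ : Y.presheaf.stalk (genericPoint Y) ⟶ P.presheaf.stalk q), σ ≫ π = 𝟙 _ ∧
      Spec.map π ≫ P.fromSpecStalk q ≫ sP = Y.fromSpecStalk (genericPoint Y) ≫ sY ∧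
      Spec.map σ ≫ Y.fromSpecStalk (genericPoint Y) ≫ sY = P.fromSpecStalk q ≫ sP := by
  obtain ⟨U, hU, -, l, -, hl⟩ := h
  have hyU : genericPoint Y ∈ U :=
    ((genericPoint_spec Y).mem_open_set_iff U.2).2 (by simpa using hU.nonempty)
  let c : Spec (Y.presheaf.stalk (genericPoint Y)) ⟶ g.domain.toScheme :=
    U.fromSpecStalkOfMem _ hyU ≫ l
  have hcg : c ≫ g.hom = Y.fromSpecStalk (genericPoint Y) := by
    rw [Category.assoc, hl, Scheme.Opens.fromSpecStalkOfMem_ι]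
  let q := (c ≫ g.domain.ι) (IsLocalRing.closedPoint (Y.presheaf.stalk (genericPoint Y)))
  have hq : q ∈ g.domain := (c (IsLocalRing.closedPoint _)).2
  let π : P.presheaf.stalk q ⟶ Y.presheaf.stalk (genericPoint Y) :=
    Scheme.stalkClosedPointTo (c ≫ g.domain.ι)
  have hπ : Spec.map π ≫ P.fromSpecStalk q = c ≫ g.domain.ι :=
    Scheme.Spec_stalkClosedPointTo_fromSpecStalk _
  have hπl : IsLocalHom π.hom := isLocalHom_stalkClosedPointTo _
  let b := g.fromSpecStalkOfMem hq
  have hπb : Spec.map π ≫ b = Y.fromSpecStalk (genericPoint Y) := by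
    have h : Spec.map π ≫ g.domain.fromSpecStalkOfMem q hq = c := by
      rw [← cancel_mono g.domain.ι, Category.assoc, Scheme.Opens.fromSpecStalkOfMem_ι, hπ]
    rw [← hcg, ← h, Category.assoc]
    rfl
  have hb : b (IsLocalRing.closedPoint _) = genericPoint Y := by
    rw [← Scheme.fromSpecStalk_closedPoint (x := genericPoint Y), ← hπb]
    exact congrArg b (IsLocalRing.comap_closedPoint π.hom).symm
  obtain ⟨σ, hσ⟩ : ∃ σ : Y.presheaf.stalk (genericPoint Y) ⟶ P.presheaf.stalk q,
      Spec.map σ ≫ Y.fromSpecStalk (genericPoint Y) = b := by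
    rw [← hb]
    exact ⟨_, Scheme.Spec_stalkClosedPointTo_fromSpecStalk b⟩
  refine ⟨q, π, σ, ?_, ?_, ?_⟩
  · apply Spec.map_injective
    rw [← cancel_mono (Y.fromSpecStalk _), Spec.map_comp, Category.assoc, hσ, hπb, Spec.map_id,
      Category.id_comp]
  · rw [reassoc_of% hπ, ← hg, ← hcg]
    simp only [Category.assoc]
  · rw [reassoc_of% hσ, ← Scheme.Opens.fromSpecStalkOfMem_ι g.domain q hq, Category.assoc, ← hg]
    exact Category.assoc _ _ _

theorem IsLocalization.exists_ringHom_lift_of_isLocalHom {k R S A K : Type*} [CommRing k]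
    [CommRing R] [CommRing S] [CommRing A] [CommRing K] (M : Submonoid R) [Algebra R S]
    [IsLocalization M S] (C : k →+* R) (π : A →+* K) [IsLocalHom π] (g : k →+* A) (v : S →+* K)
    (φ : R →+* A) (hφC : φ.comp C = g) (hφ : π.comp φ = v.comp (algebraMap R S)) :
    ∃ w : S →+* A, π.comp w = v ∧ (w.comp (algebraMap R S)).comp C = g := by
  have h (m : M) : IsUnit (φ m) := by
    refine isUnit_of_map_unit π _ ?_
    rw [← RingHom.comp_apply, hφ]
    exact (IsLocalization.map_units S m).map v
  refine ⟨IsLocalization.lift h, IsLocalization.ringHom_ext M ?_, ?_⟩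
  · rw [RingHom.comp_assoc, IsLocalization.lift_comp, hφ]
  · rw [IsLocalization.lift_comp, hφC]

theorem AlgebraicGeometry.Spec.exists_localization_iso_stalk (R : CommRingCat.{u}) (y : Spec R) :
    ∃ (p : PrimeSpectrum R)
      (e : CommRingCat.of (Localization.AtPrime p.asIdeal) ≅ (Spec R).presheaf.stalk y),
      Spec.map (CommRingCat.ofHom (algebraMap R (Localization.AtPrime p.asIdeal)) ≫ e.hom) =
        (Spec R).fromSpecStalk y := by
  let p : PrimeSpectrum R := y
  let e : Localization.AtPrime p.asIdeal ≃ₐ[R] (Spec.structureSheaf R).presheaf.stalk p :=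
    IsLocalization.algEquiv p.asIdeal.primeCompl _ _
  refine ⟨p, e.toRingEquiv.toCommRingCatIso, Eq.trans (congrArg Spec.map ?_)
    (Spec.fromSpecStalk_eq' _ _).symm⟩
  exact CommRingCat.hom_ext (RingHom.ext e.commutes)

theorem AlgebraicGeometry.IsOpenImmersion.exists_localization_iso_stalk {R : CommRingCat.{u}}
    {P : Scheme.{u}} (j : Spec R ⟶ P) [IsOpenImmersion j] (y : Spec R) :
    ∃ (p : PrimeSpectrum R)
      (e : CommRingCat.of (Localization.AtPrime p.asIdeal) ≅ P.presheaf.stalk (j y)),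
      Spec.map (CommRingCat.ofHom (algebraMap R (Localization.AtPrime p.asIdeal)) ≫ e.hom) ≫ j =
        P.fromSpecStalk (j y) := by
  obtain ⟨p, e, h⟩ := Spec.exists_localization_iso_stalk R y
  refine ⟨p, e ≪≫ (asIso (j.stalkMap y)).symm, ?_⟩
  rw [Iso.trans_hom, ← Category.assoc, Spec.map_comp, Category.assoc, h,
    ← Scheme.SpecMap_stalkMap_fromSpecStalk j (x := y), ← Spec.map_comp_assoc]
  simp

theorem AlgebraicGeometry.IsOpenImmersion.exists_isLocalHom_stalk {R F : CommRingCat.{u}}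
    [IsLocalRing F] {P : Scheme.{u}} (j : Spec R ⟶ P) [IsOpenImmersion j] (ρ : R ⟶ F) :
    ∃ (q : P) (τ : R ⟶ P.presheaf.stalk q) (π : P.presheaf.stalk q ⟶ F), IsLocalHom π.hom ∧
      τ ≫ π = ρ ∧ Spec.map τ ≫ j = P.fromSpecStalk q := by
  let y : Spec R := Spec.map ρ (IsLocalRing.closedPoint F)
  obtain ⟨p, e, he⟩ := exists_localization_iso_stalk j y
  let π : P.presheaf.stalk (j y) ⟶ F := Scheme.stalkClosedPointTo (Spec.map ρ ≫ j)
  have hπ : Spec.map π ≫ P.fromSpecStalk (j y) = Spec.map ρ ≫ j :=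
    Scheme.Spec_stalkClosedPointTo_fromSpecStalk _
  refine ⟨j y, _, π, Scheme.isLocalHom_stalkClosedPointTo _, ?_, he⟩
  apply Spec.map_injective
  rw [← cancel_mono j, Spec.map_comp, Category.assoc, he, hπ]

namespace ProjSpace

variable {k : Type u} [Field k] {N : ℕ} {i : Fin (N + 1)}

theorem chartX_self : chartX k N i i = 1 := by
  have h : IsUnit (algebraMap (MvPolynomial (Fin (N + 1)) k)
      (Localization.Away (MvPolynomial.X i : MvPolynomial (Fin (N + 1)) k))
      (MvPolynomial.X i)) := IsLocalization.Away.algebraMap_isUnit _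
  refine HomogeneousLocalization.val_injective _ (h.mul_left_cancel ?_)
  rw [algebraMap_X_mul_val_chartX, HomogeneousLocalization.val_one, mul_one]

theorem exists_chartRing_ringHom_lift {A K : Type*} [CommRing A] [CommRing K] {π : A →+* K}
    (hπ : Function.Surjective π) (g : k →+* A) (ψ : ChartRing k N i →+* K)
    (h : π.comp g = ψ.comp (chartC k N i)) :
    ∃ φ : ChartRing k N i →+* A, φ.comp (chartC k N i) = g ∧ π.comp φ = ψ := by
  choose s hs using hπ
  obtain ⟨φ, hφC, hφ⟩ := exists_chartRing_ringHom (i := i) g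
    (Function.update (fun j ↦ s (ψ (chartX k N i j))) i 1) (Function.update_self ..)
  refine ⟨φ, hφC, chartRing_ringHom_ext ?_ fun j ↦ ?_⟩
  · rw [RingHom.comp_assoc, hφC, h]
  · rw [RingHom.comp_apply, hφ]
    obtain rfl | hj := eq_or_ne j i
    · rw [Function.update_self, chartX_self, map_one, map_one]
    · rw [Function.update_of_ne hj, hs]

/-- The local ring of a point of projective space, as a `k`-algebra, is the localization of the
coordinate ring of a chart at a prime. -/
theorem exists_localization_iso_stalk (q : ProjSpace k N) :
    ∃ (i : Fin (N + 1)) (p : PrimeSpectrum (ChartRing k N i))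
      (e : CommRingCat.of (Localization.AtPrime p.asIdeal) ≅ (ProjSpace k N).presheaf.stalk q),
      Spec.map (CommRingCat.ofHom ((algebraMap _ (Localization.AtPrime p.asIdeal)).comp
        (chartC k N i)) ≫ e.hom) = (ProjSpace k N).fromSpecStalk q ≫ structMap k N := by
  obtain ⟨i, y, rfl⟩ := exists_mem_opensRange_chart k N q
  obtain ⟨p, e, he⟩ := IsOpenImmersion.exists_localization_iso_stalk (chart k N i) y
  refine ⟨i, p, e, ?_⟩
  rw [← he, Category.assoc, chart_structMap, ← Spec.map_comp]
  rfl

theorem exists_ringHom_fractionRing (p : PrimeSpectrum (ChartRing k N i)) :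
    ∃ φ : Localization.AtPrime p.asIdeal →+* FractionRing (MvPolynomial (Fin (N + 1)) k),
      φ.comp ((algebraMap _ _).comp (chartC k N i)) = algebraMap k _ := by
  obtain ⟨ψ, hψ, hC⟩ := exists_injective_chartRing_ringHom_fractionRing k N i
  have h (m : p.asIdeal.primeCompl) : IsUnit (ψ m) := by
    refine IsUnit.mk0 _ ((map_ne_zero_iff ψ hψ).2 ?_)
    rintro h
    exact m.2 (h ▸ p.asIdeal.zero_mem)
  refine ⟨IsLocalization.lift h, ?_⟩
  rw [← RingHom.comp_assoc, IsLocalization.lift_comp, hC]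

theorem exists_stalk_of_adjoin_range_eq_top {F : Type u} [Field F] [Algebra k F] {d : ℕ}
    (θ : Fin d → F) (hθ : IntermediateField.adjoin k (Set.range θ) = ⊤) :
    ∃ (q : ProjSpace k d) (κ : CommRingCat.of k ⟶ (ProjSpace k d).presheaf.stalk q)
      (π : (ProjSpace k d).presheaf.stalk q ⟶ CommRingCat.of F), IsLocalHom π.hom ∧
      Function.Surjective π ∧ κ ≫ π = CommRingCat.ofHom (algebraMap k F) ∧
      Spec.map κ = (ProjSpace k d).fromSpecStalk q ≫ structMap k d := by
  obtain ⟨ρ, hρC, hρ⟩ := exists_chartRing_ringHom (i := 0) (algebraMap k F) (Fin.cons 1 θ)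
    (Fin.cons_zero _ _)
  have : IsLocalRing (CommRingCat.of F) := inferInstanceAs (IsLocalRing F)
  obtain ⟨q, τ, π, hπ, hτ, hq⟩ := IsOpenImmersion.exists_isLocalHom_stalk
    (F := CommRingCat.of F) (chart k d 0) (CommRingCat.ofHom ρ)
  have hτ' (x) : π (τ x) = ρ x := congr($hτ x)
  refine ⟨q, CommRingCat.ofHom (chartC k d 0) ≫ τ, π, hπ, ?_, ?_, ?_⟩
  · let E : IntermediateField k F := ⟨⟨π.hom.range.toSubsemiring, fun c ↦
      ⟨τ (chartC k d 0 c), (hτ' _).trans congr($hρC c)⟩⟩, ?_⟩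
    · have hE : E = ⊤ := by
        rw [← top_le_iff, ← hθ, IntermediateField.adjoin_le_iff]
        rintro _ ⟨i, rfl⟩
        exact ⟨τ (chartX k d 0 i.succ), (hτ' _).trans ((hρ _).trans (Fin.cons_succ _ _ _))⟩
      intro x
      exact (hE ▸ trivial : x ∈ E)
    · rintro _ ⟨x, rfl⟩
      by_cases hx : π.hom x = 0
      · exact ⟨0, by rw [hx]; simp⟩
      · obtain ⟨y, hy⟩ := (isUnit_of_map_unit π.hom x (IsUnit.mk0 (G₀ := F) _ hx)).exists_left_inv
        refine ⟨y, eq_inv_of_mul_eq_one_left (G := F) ?_⟩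
        rw [← map_mul, hy, map_one]
  · rw [Category.assoc, hτ, ← CommRingCat.ofHom_comp, hρC]
  · rw [← hq, Category.assoc, chart_structMap, ← Spec.map_comp]

end ProjSpace

theorem AlgebraicGeometry.Scheme.exists_essFiniteType_stalk_genericPoint {k : Type u} [Field k]
    {Y : Scheme.{u}} (sY : Y ⟶ Spec (CommRingCat.of k)) [IsIntegral Y] [LocallyOfFiniteType sY]
    {d : ℕ} (hd : topologicalKrullDim Y ≤ (d : WithBot ℕ∞)) :
    ∃ κ : k →+* Y.functionField,
      Spec.map (CommRingCat.ofHom κ) = Y.fromSpecStalk (genericPoint Y) ≫ sY ∧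
      letI := κ.toAlgebra
      Algebra.EssFiniteType k Y.functionField ∧ ∀ s : Finset Y.functionField,
        IsTranscendenceBasis k ((↑) : s → Y.functionField) → s.card ≤ d := by
  obtain ⟨_, ⟨U, hU, rfl⟩, hη, -⟩ := Y.isBasis_affineOpens.exists_subset_of_mem_open
    (Set.mem_univ (genericPoint Y)) isOpen_univ
  replace hU : IsAffineOpen U := hU
  have : Nonempty U := ⟨_, hη⟩
  let β : CommRingCat.of k ⟶ Γ(Y, U) := Spec.preimage (hU.fromSpec ≫ sY)
  have hβ : Spec.map β = hU.fromSpec ≫ sY := Spec.map_preimage _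
  let κ : CommRingCat.of k ⟶ Y.functionField := β ≫ Y.presheaf.germ U _ hη
  have hβf : β.hom.FiniteType := by
    have h : LocallyOfFiniteType (Spec.map β) := by rw [hβ]; infer_instance
    exact (HasRingHomProperty.Spec_iff (P := @LocallyOfFiniteType)).1 h
  refine ⟨κ.hom, ?_, ?_⟩
  · change Spec.map (β ≫ Y.presheaf.germ U _ hη) = _
    rw [Spec.map_comp, hβ, ← hU.fromSpecStalk_eq_fromSpecStalk hη, IsAffineOpen.fromSpecStalk,
      Category.assoc]
  let _ : Algebra k Γ(Y, U) := β.hom.toAlgebra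
  let _ : Algebra k Y.functionField := κ.hom.toAlgebra
  have : Algebra.FiniteType k Γ(Y, U) := hβf
  have : IsFractionRing Γ(Y, U) Y.functionField :=
    functionField_isFractionRing_of_isAffineOpen Y U hU
  have : IsScalarTower k Γ(Y, U) Y.functionField := .of_algebraMap_eq' rfl
  have := Algebra.EssFiniteType.of_isLocalization Y.functionField (nonZeroDivisors Γ(Y, U))
  refine ⟨.comp k Γ(Y, U) _, fun s hs ↦ ?_⟩
  have h := (trdeg_fractionRing_le_ringKrullDim k Γ(Y, U) Y.functionField hs).trans_eq
    (PrimeSpectrum.topologicalKrullDim_eq_ringKrullDim _).symm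
  have h' := h.trans
    ((hU.fromSpec.isOpenEmbedding.isInducing.topologicalKrullDim_le).trans hd)
  exact_mod_cast h'

/-- **Remark after Lemma 1.**  Since any variety is birational to a hypersurface, any
retract rational `k`-variety `Y` admits a rational map `Y ⇢ ℙ^{dim Y + 1}` with a
rational section. -/
theorem exists_rational_map_to_proj_dim_add_one_with_section
    (k : Type u) [Field k] (Y : Scheme.{u}) (sY : Y ⟶ Spec (CommRingCat.of k))
    [IsIntegral Y] [LocallyOfFiniteType sY] [QuasiCompact sY] [IsSeparated sY]
    (hY : IsRetractRational k Y sY)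
    (d : ℕ) (hd : topologicalKrullDim Y = (d : WithBot ℕ∞)) :
    ∃ (f : Y.PartialMap (ProjSpace k (d + 1))) (g : (ProjSpace k (d + 1)).PartialMap Y),
      f.IsOverStruct sY (ProjSpace.structMap k (d + 1)) ∧
      g.IsOverStruct (ProjSpace.structMap k (d + 1)) sY ∧
      f.CompEqId g := by
  obtain ⟨N, -, f₀, g₀, -, hg₀, h₀⟩ := hY
  obtain ⟨q₀, π₀, σ₀, hσπ₀, hπ₀, hσ₀⟩ := h₀.exists_stalk hg₀
  obtain ⟨i, p, e, he⟩ := ProjSpace.exists_localization_iso_stalk q₀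
  obtain ⟨κ, hκ, hF, hcard⟩ := Scheme.exists_essFiniteType_stalk_genericPoint sY hd.le
  algebraize [κ]
  let κ₀ : k →+* Localization.AtPrime p.asIdeal :=
    (algebraMap _ (Localization.AtPrime p.asIdeal)).comp (ProjSpace.chartC k N i)
  have hκπ : CommRingCat.ofHom κ₀ ≫ e.hom ≫ π₀ = CommRingCat.ofHom κ := by
    apply Spec.map_injective
    rw [← Category.assoc, Spec.map_comp, he, hκ, hπ₀]
  have hκσ : CommRingCat.ofHom κ ≫ σ₀ ≫ e.inv = CommRingCat.ofHom κ₀ := by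
    rw [← Category.assoc, Iso.comp_inv_eq]
    apply Spec.map_injective
    rw [Spec.map_comp, he, hκ, hσ₀]
  obtain ⟨φ, hφ⟩ := ProjSpace.exists_ringHom_fractionRing p
  let j : Y.functionField →ₐ[k] FractionRing (MvPolynomial (Fin (N + 1)) k) :=
    { toRingHom := φ.comp (σ₀ ≫ e.inv).hom
      commutes' := fun c ↦ (congrArg φ congr($hκσ c)).trans congr($hφ c) }
  obtain ⟨θ, hθ⟩ := exists_adjoin_range_eq_top_of_algHom_fractionRing j d hcard
  obtain ⟨q, κ', π, hπ, hπs, hκ', hq⟩ := ProjSpace.exists_stalk_of_adjoin_range_eq_top θ hθ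
  let v : Localization.AtPrime p.asIdeal →+* Y.functionField := (e.hom ≫ π₀).hom
  obtain ⟨ψ, hψC, hψ⟩ := ProjSpace.exists_chartRing_ringHom_lift (i := i) hπs κ'.hom
    (v.comp (algebraMap _ _)) (congr(($hκ').hom).trans congr(($hκπ).hom).symm)
  obtain ⟨w, hw, hwC⟩ := IsLocalization.exists_ringHom_lift_of_isLocalHom p.asIdeal.primeCompl
    (ProjSpace.chartC k N i) π.hom κ'.hom v ψ hψC hψ
  let ω : CommRingCat.of (Localization.AtPrime p.asIdeal) ⟶
    (ProjSpace k (d + 1)).presheaf.stalk q := CommRingCat.ofHom w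
  have hω : ω ≫ π = e.hom ≫ π₀ := CommRingCat.hom_ext hw
  have hκω : CommRingCat.ofHom κ₀ ≫ ω = κ' := CommRingCat.hom_ext hwC
  refine Scheme.PartialMap.exists_compEqId_of_stalk sY (ProjSpace.structMap k (d + 1)) π
    ((σ₀ ≫ e.inv) ≫ ω) ?_ ?_ ?_
  · refine (Category.assoc _ _ _).trans ?_
    rw [hω]
    simp [hσπ₀]
  · rw [← hκ, ← hq, ← Spec.map_comp]
    exact congrArg Spec.map hκ'
  · rw [← hκ, ← hq, ← Spec.map_comp, ← Category.assoc, hκσ, hκω]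
end

section
/- Let h : X → Y be a dominant morphism of k-varieties whose generic fibre X_η is irreducible. If X_η is retract rational over the function field k(Y) and Y is retract rational over k, then X is retract rational over k. -/
open AlgebraicGeometry CategoryTheory CategoryTheory.Limits TopologicalSpace

universe u

attribute [local instance] MvPolynomial.gradedAlgebra

/-- The generic fibre of a morphism `h : X ⟶ Y` with `Y` irreducible:  the fibre of `h`
over the generic point of `Y`, a scheme over the function field `k(Y)`. -/
noncomputable def GenericFibre {X Y : Scheme.{u}} [IrreducibleSpace Y] (h : X ⟶ Y) :
    Scheme.{u} :=
  Limits.pullback h (Y.fromSpecStalk (genericPoint Y))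

/-- The structure morphism of the generic fibre over `Spec k(Y)`. -/
noncomputable def GenericFibre.structMap {X Y : Scheme.{u}} [IrreducibleSpace Y]
    (h : X ⟶ Y) : GenericFibre h ⟶ Spec (CommRingCat.of (Y.functionField)) :=
  Limits.pullback.snd h (Y.fromSpecStalk (genericPoint Y))

namespace RingHom

/-- An algebra `i : k → L` is a *local retract* of an algebra `a : k → A` if `L` is a retract, over
`k`, of the localization of `A` at some prime ideal. -/
def IsLocalRetract {k A L : Type*} [CommRing k] [CommRing A] [CommRing L]
    (a : k →+* A) (i : k →+* L) : Prop :=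
  ∃ (p : Ideal A) (_ : p.IsPrime) (φ : L →+* Localization.AtPrime p)
    (ψ : Localization.AtPrime p →+* L),
      ψ.comp φ = RingHom.id L ∧ φ.comp i = (algebraMap A (Localization.AtPrime p)).comp a

namespace IsLocalRetract

variable {k A B L K : Type*} [CommRing k] [CommRing A] [CommRing B] [CommRing L] [CommRing K]

lemma of_retract {a : k →+* A} {i : k →+* L} (h : IsLocalRetract a i) (s : A →+* B)
    (r : B →+* A) (hrs : r.comp s = RingHom.id A) : IsLocalRetract (s.comp a) i := by
  obtain ⟨p, hp, φ, ψ, hψφ, hφ⟩ := h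
  have hq : p = (p.comap r).comap s := by rw [Ideal.comap_comap, hrs, Ideal.comap_id]
  refine ⟨p.comap r, inferInstance, (Localization.localRingHom p _ s hq).comp φ,
    ψ.comp (Localization.localRingHom (p.comap r) p r rfl), ?_, ?_⟩
  · rw [RingHom.comp_assoc, ← RingHom.comp_assoc φ, ← Localization.localRingHom_comp]
    simp_rw [hrs]
    rw [Localization.localRingHom_id, RingHom.id_comp, hψφ]
  · rw [RingHom.comp_assoc, hφ]
    ext x
    simp [Localization.localRingHom_to_map]

lemma restrictScalars {a : K →+* A} {j : K →+* L} (h : IsLocalRetract a j) (i : k →+* K) :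
    IsLocalRetract (a.comp i) (j.comp i) := by
  obtain ⟨p, hp, φ, ψ, hψφ, hφ⟩ := h
  refine ⟨p, hp, φ, ψ, hψφ, ?_⟩
  rw [← RingHom.comp_assoc, hφ, RingHom.comp_assoc]

lemma of_isLocalization {a : k →+* A} [Algebra A B] (M : Submonoid A) [IsLocalization M B]
    {i : k →+* L} (h : IsLocalRetract ((algebraMap A B).comp a) i) : IsLocalRetract a i := by
  obtain ⟨p, hp, φ, ψ, hψφ, hφ⟩ := h
  have := IsLocalization.isLocalization_isLocalization_atPrime_isLocalization M
    (Localization.AtPrime p) p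
  let e : Localization.AtPrime p ≃ₐ[A] Localization.AtPrime (p.comap (algebraMap A B)) :=
    IsLocalization.algEquiv (p.comap (algebraMap A B)).primeCompl _ _
  refine ⟨p.comap (algebraMap A B), inferInstance, (e : _ →+* _).comp φ,
    ψ.comp (e.symm : _ →+* _), ?_, ?_⟩
  · ext x
    simpa using congr($hψφ x)
  · rw [RingHom.comp_assoc, hφ]
    ext x
    simp [← IsScalarTower.algebraMap_apply]

/-- Local retracts of polynomial rings compose. -/
lemma trans_mvPolynomial {σ τ : Type*} {i : k →+* K} {j : K →+* L}
    (hi : IsLocalRetract (MvPolynomial.C : k →+* MvPolynomial σ k) i)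
    (hj : IsLocalRetract (MvPolynomial.C : K →+* MvPolynomial τ K) j) :
    IsLocalRetract (MvPolynomial.C : k →+* MvPolynomial (τ ⊕ σ) k) (j.comp i) := by
  obtain ⟨p, hp, φ, ψ, hψφ, hφ⟩ := hi
  have h₁ := hj.of_retract (MvPolynomial.map φ) (MvPolynomial.map ψ) (by
    ext x
    · simpa using congr(MvPolynomial.coeff _ (MvPolynomial.C $(congr($hψφ x))))
    · simp)
  let := MvPolynomial.algebraMvPolynomial (R := MvPolynomial σ k) (S := Localization.AtPrime p)
    (σ := τ)
  have h₂ : IsLocalRetract (A := MvPolynomial τ (Localization.AtPrime p))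
      ((algebraMap (MvPolynomial τ (MvPolynomial σ k))
        (MvPolynomial τ (Localization.AtPrime p))).comp (MvPolynomial.C.comp MvPolynomial.C))
      (j.comp i) := by
    convert! h₁.restrictScalars i using 1
    ext x : 1
    have := congr($hφ x)
    simp only [RingHom.comp_apply] at this
    simp only [RingHom.comp_apply, MvPolynomial.map_C, this]
    exact (MvPolynomial.map_C _ _)
  have h₃ := h₂.of_isLocalization (p.primeCompl.map (MvPolynomial.C (σ := τ)))
  have h₄ := h₃.of_retract (MvPolynomial.sumAlgEquiv k τ σ).symm.toRingEquiv.toRingHom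
    (MvPolynomial.sumAlgEquiv k τ σ).toRingEquiv.toRingHom (by ext <;> simp)
  convert! h₄ using 1
  exact RingHom.ext fun x ↦ (MvPolynomial.sumAlgEquiv_symm_C_C k τ σ x).symm

end IsLocalRetract

end RingHom

section Charts

open MvPolynomial HomogeneousLocalization

variable (k : Type u) [Field k] (N : ℕ)

/-- The structure map of the standard chart of projective space. -/
noncomputable def ProjSpace.toAway (i : Fin (N + 1)) :
    k →+* Away (homogeneousSubmodule (Fin (N + 1)) k) (X i) :=
  (fromZeroRingHom _ _).comp
    ((GradedRing.projZeroRingHom' (homogeneousSubmodule (Fin (N + 1)) k)).comp C)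

lemma ProjSpace.val_toAway (i : Fin (N + 1)) (a : k) :
    (ProjSpace.toAway k N i a).val = algebraMap _ _ (C a : MvPolynomial (Fin (N + 1)) k) := by
  change Localization.mk _ _ = _
  rw [← Localization.mk_one_eq_algebraMap]
  congr 1
  exact DirectSum.decompose_of_mem_same _ (isHomogeneous_C _ a)

/-- The homogeneous coordinate `X j / X i` on the standard chart `X i ≠ 0`. -/
noncomputable def ProjSpace.coord (i j : Fin (N + 1)) :
    Away (homogeneousSubmodule (Fin (N + 1)) k) (X i) :=
  Away.mk _ (d := 1) (isHomogeneous_X k i) 1 (X j) (isHomogeneous_X k j)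

lemma ProjSpace.val_coord (i j : Fin (N + 1)) :
    (ProjSpace.coord k N i j).val =
      Localization.mk (X j) ⟨X i, Submonoid.mem_powers _⟩ := by
  exact (Away.val_mk _ _ _ _ _).trans (by simp)

/-- Dehomogenization with respect to the `i`-th coordinate. -/
noncomputable def ProjSpace.dehomogenize {B : Type*} [CommRing B] [Algebra k B] (i : Fin (N + 1))
    (b : Fin (N + 1) → B) (hb : b i = 1) :
    Away (homogeneousSubmodule (Fin (N + 1)) k) (X i) →+* B :=
  (IsLocalization.Away.lift (S := Localization.Away (X i : MvPolynomial (Fin (N + 1)) k)) (X i)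
    (g := (aeval (R := k) b).toRingHom) (by simp [hb])).comp
    (algebraMap _ (Localization.Away (X i : MvPolynomial (Fin (N + 1)) k)))

variable {k N}

lemma ProjSpace.dehomogenize_eq {B : Type*} [CommRing B] [Algebra k B] {i : Fin (N + 1)}
    {b : Fin (N + 1) → B} (hb : b i = 1) {x : Away (homogeneousSubmodule (Fin (N + 1)) k) (X i)}
    {f : MvPolynomial (Fin (N + 1)) k} {n : ℕ}
    (hx : x.val = Localization.mk f ⟨X i ^ n, pow_mem (Submonoid.mem_powers _) n⟩) :
    ProjSpace.dehomogenize k N i b hb x = aeval b f := by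
  simp [ProjSpace.dehomogenize, hx, Localization.mk_eq_mk'_apply, IsLocalization.Away.lift,
    IsLocalization.lift_mk'_spec, hb]

@[simp]
lemma ProjSpace.dehomogenize_coord {B : Type*} [CommRing B] [Algebra k B] {i : Fin (N + 1)}
    {b : Fin (N + 1) → B} (hb : b i = 1) (j : Fin (N + 1)) :
    ProjSpace.dehomogenize k N i b hb (ProjSpace.coord k N i j) = b j := by
  rw [ProjSpace.dehomogenize_eq hb (f := X j) (n := 1), aeval_X]
  simp [ProjSpace.val_coord]

@[simp]
lemma ProjSpace.dehomogenize_toAway {B : Type*} [CommRing B] [Algebra k B] {i : Fin (N + 1)}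
    {b : Fin (N + 1) → B} (hb : b i = 1) (a : k) :
    ProjSpace.dehomogenize k N i b hb (ProjSpace.toAway k N i a) = algebraMap k B a := by
  rw [ProjSpace.dehomogenize_eq hb (f := C a) (n := 0), aeval_C]
  simp only [ProjSpace.val_toAway, pow_zero]
  exact (Localization.mk_one_eq_algebraMap _).symm

lemma ProjSpace.coord_self (i : Fin (N + 1)) : ProjSpace.coord k N i i = 1 := by
  ext
  rw [ProjSpace.val_coord, val_one]
  exact Localization.mk_self
    (⟨X i, Submonoid.mem_powers _⟩ : Submonoid.powers (X i : MvPolynomial (Fin (N + 1)) k))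

lemma ProjSpace.val_eval₂_coord (i : Fin (N + 1))
    {f : MvPolynomial (Fin (N + 1)) k} {n : ℕ} (hf : f.IsHomogeneous n) :
    (eval₂ (ProjSpace.toAway k N i) (ProjSpace.coord k N i) f).val =
      Localization.mk f ⟨X i ^ n, pow_mem (Submonoid.mem_powers _) n⟩ := by
  let u : Localization.Away (X i : MvPolynomial (Fin (N + 1)) k) :=
    Localization.mk 1 ⟨X i, Submonoid.mem_powers _⟩
  have hcoord (j) : (ProjSpace.coord k N i j).val =
      algebraMap (MvPolynomial (Fin (N + 1)) k) _ (X j) * u := by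
    rw [ProjSpace.val_coord, ← Localization.mk_one_eq_algebraMap, Localization.mk_mul]
    simp
  have hmk : Localization.mk f ⟨X i ^ n, pow_mem (Submonoid.mem_powers _) n⟩ =
      algebraMap (MvPolynomial (Fin (N + 1)) k) _ f * u ^ n := by
    rw [← Localization.mk_one_eq_algebraMap, Localization.mk_pow, Localization.mk_mul]
    simp
  rw [hmk, ← HomogeneousLocalization.algebraMap_apply, eval₂_eq, map_sum]
  conv_rhs => rw [f.as_sum, map_sum, Finset.sum_mul]
  refine Finset.sum_congr rfl fun d hd ↦ ?_
  have hd' : ∑ j ∈ d.support, d j = n := by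
    have := hf (mem_support_iff.mp hd)
    rw [← Finsupp.degree_apply, Finsupp.degree_eq_weight_one]
    exact this
  simp only [map_mul, map_prod, map_pow, HomogeneousLocalization.algebraMap_apply, hcoord,
    ProjSpace.val_toAway, mul_pow, Finset.prod_mul_distrib, Finset.prod_pow_eq_pow_sum, hd']
  rw [monomial_eq, map_mul, Finsupp.prod, map_prod]
  simp only [map_pow, mul_assoc]

variable (k N)

/-- The standard chart of `ℙ^N` is a retract of a polynomial ring in `N + 1` variables. -/
lemma ProjSpace.eval₂_comp_dehomogenize (i : Fin (N + 1)) :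
    (eval₂Hom (ProjSpace.toAway k N i) (ProjSpace.coord k N i)).comp
      (ProjSpace.dehomogenize k N i (Function.update X i 1) (by simp)) = RingHom.id _ := by
  refine RingHom.ext fun x ↦ ?_
  obtain ⟨n, f, hf, rfl⟩ := Away.mk_surjective _
    ((mem_homogeneousSubmodule 1 _).mpr (isHomogeneous_X k i)) x
  have hf' : f.IsHomogeneous n := by simpa using hf
  have key : eval₂Hom (ProjSpace.toAway k N i) (ProjSpace.coord k N i)
      (aeval (Function.update X i 1) f) =
        eval₂ (ProjSpace.toAway k N i) (ProjSpace.coord k N i) f := by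
    suffices (eval₂Hom (ProjSpace.toAway k N i) (ProjSpace.coord k N i)).comp
        (aeval (R := k) (Function.update X i 1)).toRingHom =
          eval₂Hom (ProjSpace.toAway k N i) (ProjSpace.coord k N i) from congr($this f)
    refine ringHom_ext (by simp) fun j ↦ ?_
    obtain rfl | hj := eq_or_ne j i <;> simp [*, ProjSpace.coord_self]
  rw [RingHom.comp_apply, ProjSpace.dehomogenize_eq _ (Away.val_mk _ _ _ _ _), key]
  apply val_injective
  rw [ProjSpace.val_eval₂_coord _ hf']
  rfl

/-- Affine space of dimension `N` is a retract of a standard chart of `ℙ^N`. -/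
lemma ProjSpace.dehomogenize_comp_eval₂ :
    (ProjSpace.dehomogenize k N 0 (Fin.cons 1 X) (by simp)).comp
      (eval₂Hom (ProjSpace.toAway k N 0) (fun j : Fin N ↦ ProjSpace.coord k N 0 j.succ)) =
    RingHom.id (MvPolynomial (Fin N) k) := by
  ext <;> simp

lemma RingHom.IsLocalRetract.of_toAway {k L : Type u} [Field k] [CommRing L] {N : ℕ}
    {i : Fin (N + 1)} {ι : k →+* L} (h : RingHom.IsLocalRetract (ProjSpace.toAway k N i) ι) :
    RingHom.IsLocalRetract (C : k →+* MvPolynomial (Fin (N + 1)) k) ι := by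
  have := h.of_retract _ _ (ProjSpace.eval₂_comp_dehomogenize k N i)
  convert this using 1
  ext
  simp [MvPolynomial.algebraMap_eq]

lemma RingHom.IsLocalRetract.toAway {k L : Type u} [Field k] [CommRing L] {N : ℕ}
    {ι : k →+* L} (h : RingHom.IsLocalRetract (C : k →+* MvPolynomial (Fin N) k) ι) :
    RingHom.IsLocalRetract (ProjSpace.toAway k N 0) ι := by
  have := h.of_retract _ _ (ProjSpace.dehomogenize_comp_eval₂ k N)
  convert this using 1
  ext
  simp

end Charts

lemma AlgebraicGeometry.exists_lift_of_closedPoint_mem {R : CommRingCat.{u}} [IsLocalRing R]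
    {X U : Scheme.{u}} (ι : U ⟶ X) [IsOpenImmersion ι] (f : Spec R ⟶ X)
    (hf : f (IsLocalRing.closedPoint R) ∈ Set.range ι) : ∃ g : Spec R ⟶ U, g ≫ ι = f := by
  refine ⟨IsOpenImmersion.lift ι f ?_, IsOpenImmersion.lift_fac _ _ _⟩
  have := Scheme.preimage_eq_top_of_closedPoint_mem (f := f) (U := ι.opensRange) hf
  rintro _ ⟨y, rfl⟩
  have hy : y ∈ f ⁻¹ᵁ ι.opensRange := this ▸ trivial
  exact hy

lemma AlgebraicGeometry.exists_specMap_fromSpecStalk {R : CommRingCat.{u}} [IsLocalRing R]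
    {X : Scheme.{u}} {x : X} (f : Spec R ⟶ X) (hf : f (IsLocalRing.closedPoint R) = x) :
    ∃ φ : X.presheaf.stalk x ⟶ R, Spec.map φ ≫ X.fromSpecStalk x = f := by
  subst hf
  exact ⟨_, Scheme.Spec_stalkClosedPointTo_fromSpecStalk f⟩

lemma RingHom.exists_isLocalHom_comp_algebraMap {A L : Type*} [CommRing A] [CommRing L]
    [IsLocalRing L] (σ : A →+* L) :
    ∃ ψ : Localization.AtPrime ((IsLocalRing.maximalIdeal L).comap σ) →+* L,
      IsLocalHom ψ ∧ ψ.comp (algebraMap A _) = σ := by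
  have hσ (y : ((IsLocalRing.maximalIdeal L).comap σ).primeCompl) : IsUnit (σ y) := by
    simpa [Ideal.primeCompl] using y.2
  refine ⟨IsLocalization.lift hσ, ⟨fun z hz ↦ ?_⟩, IsLocalization.lift_comp hσ⟩
  obtain ⟨y, s, rfl⟩ := IsLocalization.exists_mk'_eq
    ((IsLocalRing.maximalIdeal L).comap σ).primeCompl z
  rw [IsLocalization.lift_mk', Units.isUnit_mul_units] at hz
  rw [IsLocalization.AtPrime.isUnit_mk'_iff _ ((IsLocalRing.maximalIdeal L).comap σ)]
  simpa [Ideal.primeCompl] using hz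

/-- Suppose the identity of `Z` factors rationally through `P`, and `Z ⟶ X` is a monomorphism
such that `Spec 𝒪_{X, x}` lifts to `Z`. If the image of the closed point lies in every dense open of
`Z`, then `𝒪_{X, x}` is a retract of some local ring of `P`. -/
lemma AlgebraicGeometry.Scheme.PartialMap.CompEqId.exists_isLocalRetract
    {K : Type u} [CommRing K] {Z X P : Scheme.{u}} {f : Z.PartialMap P} {g : P.PartialMap Z}
    (H : f.CompEqId g) {sZ : Z ⟶ Spec (.of K)} {sP : P ⟶ Spec (.of K)}
    (hg : g.IsOverStruct sP sZ)
    {ι : Type*} {A : ι → Type u} [∀ i, CommRing (A i)] (a : ∀ i, K →+* A i)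
    (c : ∀ i, Spec (.of (A i)) ⟶ P) [∀ i, IsOpenImmersion (c i)]
    (hc : ∀ i, c i ≫ sP = Spec.map (CommRingCat.ofHom (a i))) (hP : ∀ x, ∃ i, x ∈ Set.range (c i))
    (h : Z ⟶ X) [Mono h] {x : X} (j : Spec (X.presheaf.stalk x) ⟶ Z)
    (hj : j ≫ h = X.fromSpecStalk x)
    (hjmem : ∀ U : Z.Opens, Dense (U : Set Z) → j (IsLocalRing.closedPoint _) ∈ U)
    (τ : K →+* X.presheaf.stalk x) (hτ : j ≫ sZ = Spec.map (CommRingCat.ofHom τ)) :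
    ∃ i, RingHom.IsLocalRetract (a i) τ := by
  obtain ⟨U, hU, hle, lift, hlift, hlift'⟩ := H
  obtain ⟨jU, hjU⟩ := exists_lift_of_closedPoint_mem U.ι j (by simpa using hjmem U hU)
  obtain ⟨i, hi⟩ := hP ((jU ≫ lift ≫ g.domain.ι) (IsLocalRing.closedPoint _))
  obtain ⟨s, hs⟩ := exists_lift_of_closedPoint_mem (c i) _ hi
  obtain ⟨σ, rfl⟩ := Spec.map_surjective s
  let p : Ideal (A i) := (IsLocalRing.maximalIdeal (X.presheaf.stalk x)).comap σ.hom
  let B : CommRingCat.{u} := .of (Localization.AtPrime p)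
  have : IsLocalRing B := inferInstanceAs (IsLocalRing (Localization.AtPrime p))
  let ℓ : CommRingCat.of (A i) ⟶ B :=
    CommRingCat.ofHom (algebraMap (A i) (Localization.AtPrime p))
  obtain ⟨ψ', hψ'l, hψ'⟩ := RingHom.exists_isLocalHom_comp_algebraMap σ.hom
  let ψ : B ⟶ X.presheaf.stalk x := CommRingCat.ofHom ψ'
  have hψ : ℓ ≫ ψ = σ := CommRingCat.hom_ext hψ'
  have hψc {W : Scheme.{u}} (b : Spec B ⟶ W) :
      b (IsLocalRing.closedPoint B) = (Spec.map ψ ≫ b) (IsLocalRing.closedPoint _) :=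
    congr(b $((IsLocalRing.comap_closedPoint ψ').symm))
  obtain ⟨t, ht⟩ := exists_lift_of_closedPoint_mem g.domain.ι (Spec.map ℓ ≫ c i) (by
    rw [hψc, ← Spec.map_comp_assoc, hψ, hs]
    exact ⟨lift (jU (IsLocalRing.closedPoint _)), rfl⟩)
  have hψt : Spec.map ψ ≫ t = jU ≫ lift := by
    rw [← cancel_mono g.domain.ι, Category.assoc, ht, ← Spec.map_comp_assoc, hψ, hs, Category.assoc]
  have hψb : Spec.map ψ ≫ t ≫ g.hom = j := by
    rw [reassoc_of% hψt, hlift', hjU]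
  obtain ⟨φ, hφ⟩ := exists_specMap_fromSpecStalk (x := x) (t ≫ g.hom ≫ h) (by
    rw [hψc, reassoc_of% hψb, hj, Scheme.fromSpecStalk_closedPoint])
  have hφj : Spec.map φ ≫ j = t ≫ g.hom := by
    rw [← cancel_mono h, Category.assoc, hj, hφ, Category.assoc]
  have hφψ : φ ≫ ψ = 𝟙 _ := by
    apply Spec.map_injective
    rw [← cancel_mono (X.fromSpecStalk x), Spec.map_comp, Category.assoc, hφ, reassoc_of% hψb, hj]
    simp
  have hτφ : CommRingCat.ofHom τ ≫ φ = CommRingCat.ofHom (a i) ≫ ℓ := by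
    apply Spec.map_injective
    rw [Spec.map_comp, ← hτ, reassoc_of% hφj, hg, reassoc_of% ht, hc, Spec.map_comp]
  exact ⟨i, p, inferInstance, φ.hom, ψ.hom, congr(($hφψ).hom), congr(($hτφ).hom)⟩

section Charts

open MvPolynomial

variable (k : Type u) [Field k] (N : ℕ)

/-- The inclusion of the standard chart `X i ≠ 0` into projective space. -/
noncomputable def ProjSpace.chart_s5 (i : Fin (N + 1)) :
    Spec (.of (HomogeneousLocalization.Away (homogeneousSubmodule (Fin (N + 1)) k) (X i))) ⟶
      ProjSpace k N :=
  Proj.awayι _ (X i) ((mem_homogeneousSubmodule 1 _).mpr (isHomogeneous_X k i)) one_pos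

instance (i : Fin (N + 1)) : IsOpenImmersion (ProjSpace.chart_s5 k N i) :=
  inferInstanceAs (IsOpenImmersion (Proj.awayι _ _ _ _))

lemma ProjSpace.chart_structMap_s5 (i : Fin (N + 1)) :
    ProjSpace.chart_s5 k N i ≫ ProjSpace.structMap k N =
      Spec.map (CommRingCat.ofHom (ProjSpace.toAway k N i)) := by
  exact (Proj.awayι_toSpecZero_assoc _ _ _ _ _).trans (Spec.map_comp _ _).symm

lemma ProjSpace.exists_mem_range_chart (x : ProjSpace k N) :
    ∃ i, x ∈ Set.range (ProjSpace.chart_s5 k N i) := by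
  have h := Proj.iSup_basicOpen_eq_top' (homogeneousSubmodule (Fin (N + 1)) k) X
    (fun i ↦ ⟨1, (mem_homogeneousSubmodule 1 _).mpr (isHomogeneous_X k i)⟩) (by
      rw [eq_top_iff]
      rintro f -
      induction f using MvPolynomial.induction_on with
      | C a =>
        exact Subalgebra.algebraMap_mem (R := homogeneousSubmodule (Fin (N + 1)) k 0) _
          ⟨_, (mem_homogeneousSubmodule 0 _).mpr (isHomogeneous_C _ a)⟩
      | add p q hp hq => exact add_mem hp hq
      | mul_X p i hp => exact mul_mem hp (Algebra.subset_adjoin ⟨i, rfl⟩))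
  obtain ⟨i, hi⟩ := Opens.mem_iSup.mp (h.ge (Set.mem_univ x))
  refine ⟨i, ?_⟩
  rw [← Proj.opensRange_awayι _ (X i) ((mem_homogeneousSubmodule 1 _).mpr (isHomogeneous_X k i))
    one_pos] at hi
  exact hi

lemma ProjSpace.dense_of_nonempty {U : (ProjSpace k N).Opens}
    (hU : (U : Set (ProjSpace k N)).Nonempty) : Dense (U : Set (ProjSpace k N)) := by
  have : IsDomain (MvPolynomial (Fin (N + 1)) k) := inferInstance
  let 𝒜 := homogeneousSubmodule (Fin (N + 1)) k
  let ξ : ProjectiveSpectrum 𝒜 :=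
    { asHomogeneousIdeal := ⊥
      isPrime := by
        change (⊥ : HomogeneousIdeal 𝒜).toIdeal.IsPrime
        rw [HomogeneousIdeal.toIdeal_bot]
        exact Ideal.isPrime_bot
      not_irrelevant_le := fun hle ↦ by
        have : (X 0 : MvPolynomial (Fin (N + 1)) k) ∈ HomogeneousIdeal.irrelevant 𝒜 := by
          rw [HomogeneousIdeal.mem_irrelevant_iff]
          exact DirectSum.decompose_of_mem_ne 𝒜
            ((mem_homogeneousSubmodule 1 _).mpr (isHomogeneous_X k 0)) one_ne_zero
        have h0 := hle this
        rw [← HomogeneousIdeal.mem_iff, HomogeneousIdeal.toIdeal_bot, Ideal.mem_bot] at h0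
        exact X_ne_zero 0 h0 }
  have key (V : (ProjSpace k N).Opens) (hV : (V : Set (ProjSpace k N)).Nonempty) :
      (ξ : ProjSpace k N) ∈ V := by
    obtain ⟨x, hx⟩ := hV
    obtain ⟨_, ⟨f, rfl⟩, hxf, hfV⟩ := (Opens.isBasis_iff_nbhd.mp (Proj.isBasis_basicOpen 𝒜)) hx
    refine hfV ((Proj.mem_basicOpen 𝒜 f ξ).mpr fun h0 ↦ ?_)
    obtain rfl : f = 0 := h0
    exact (Proj.mem_basicOpen 𝒜 0 x).mp hxf (zero_mem _)
  rw [dense_iff_inter_open]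
  exact fun V hV hne ↦ ⟨ξ, key ⟨V, hV⟩ hne, key U hU⟩

lemma ProjSpace.finiteType_toAway (i : Fin (N + 1)) :
    (ProjSpace.toAway k N i).FiniteType := by
  have hC : (C : k →+* MvPolynomial (Fin (N + 1)) k).FiniteType :=
    RingHom.finiteType_algebraMap.mpr (inferInstanceAs (Algebra.FiniteType k (MvPolynomial _ k)))
  have heq : (eval₂Hom (ProjSpace.toAway k N i) (ProjSpace.coord k N i)).comp C =
      ProjSpace.toAway k N i := by
    ext
    simp
  rw [← heq]
  exact .comp (.of_surjective _
    fun x ↦ ⟨_, congr($(ProjSpace.eval₂_comp_dehomogenize k N i) x)⟩) hC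

lemma ProjSpace.isDomain_away (i : Fin (N + 1)) :
    IsDomain (HomogeneousLocalization.Away (homogeneousSubmodule (Fin (N + 1)) k) (X i)) := by
  have hinj : Function.LeftInverse (eval₂Hom (ProjSpace.toAway k N i) (ProjSpace.coord k N i))
      (ProjSpace.dehomogenize k N i (Function.update X i 1) (by simp)) :=
    fun x ↦ congr($(ProjSpace.eval₂_comp_dehomogenize k N i) x)
  exact hinj.injective.isDomain _

end Charts

/-- A local ring `𝒪_{X, x}` lifting along a monomorphism `Z ⟶ X` to a retract rational scheme `Z` is
a retract of a local ring of affine space. -/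
lemma IsRetractRational.exists_isLocalRetract {K : Type u} [Field K] {Z X : Scheme.{u}}
    {sZ : Z ⟶ Spec (.of K)} (H : IsRetractRational K Z sZ)
    (h : Z ⟶ X) [Mono h] {x : X} (j : Spec (X.presheaf.stalk x) ⟶ Z)
    (hj : j ≫ h = X.fromSpecStalk x)
    (hjmem : ∀ U : Z.Opens, Dense (U : Set Z) → j (IsLocalRing.closedPoint _) ∈ U)
    (τ : K →+* X.presheaf.stalk x) (hτ : j ≫ sZ = Spec.map (CommRingCat.ofHom τ)) :
    ∃ N, RingHom.IsLocalRetract (MvPolynomial.C : K →+* MvPolynomial (Fin (N + 1)) K) τ := by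
  obtain ⟨N, -, f, g, -, hg, hfg⟩ := H
  obtain ⟨i, hi⟩ := hfg.exists_isLocalRetract hg (ProjSpace.toAway K N) (ProjSpace.chart_s5 K N)
    (ProjSpace.chart_structMap_s5 K N) (ProjSpace.exists_mem_range_chart K N) h j hj hjmem τ hτ
  exact ⟨N, hi.of_toAway⟩

/-- If the function field of `X` is a retract of a local ring of a chart of `P`, then the identity
of `X` factors rationally through `P`. -/
lemma AlgebraicGeometry.exists_compEqId {k : Type u} [CommRing k] {X P : Scheme.{u}} [IsIntegral X]
    {sX : X ⟶ Spec (.of k)} [LocallyOfFiniteType sX] [IsSeparated sX] {sP : P ⟶ Spec (.of k)}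
    {A : Type u} [CommRing A] [IsDomain A] (a : k →+* A) (ha : a.FiniteType)
    (c : Spec (.of A) ⟶ P) [IsOpenImmersion c] (hc : c ≫ sP = Spec.map (CommRingCat.ofHom a))
    (hP : ∀ U : P.Opens, (U : Set P).Nonempty → Dense (U : Set P))
    (τ : k →+* X.presheaf.stalk (genericPoint X))
    (hτ : X.fromSpecStalk (genericPoint X) ≫ sX = Spec.map (CommRingCat.ofHom τ))
    (H : RingHom.IsLocalRetract a τ) :
    ∃ (f : X.PartialMap P) (g : P.PartialMap X),
      f.IsOverStruct sX sP ∧ g.IsOverStruct sP sX ∧ f.CompEqId g := by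
  obtain ⟨p, hp, φ, ψ, hψφ, hφτ⟩ := H
  let S : Scheme.{u} := Spec (.of A)
  let sS : S ⟶ Spec (.of k) := Spec.map (CommRingCat.ofHom a)
  have : IsIntegral S := inferInstanceAs (IsIntegral (Spec (.of A)))
  have : LocallyOfFiniteType sS :=
    (HasRingHomProperty.Spec_iff (P := @LocallyOfFiniteType)).mpr ha
  let q : S := (⟨p, hp⟩ : PrimeSpectrum A)
  let ℓ : CommRingCat.of A ⟶ .of (Localization.AtPrime p) := CommRingCat.ofHom (algebraMap A _)
  let e : S.presheaf.stalk q ≅ .of (Localization.AtPrime p) := Spec.stalkIso (.of A) q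
  have he : S.fromSpecStalk q = Spec.map e.inv ≫ Spec.map ℓ := by
    rw [← Spec.map_comp]
    exact (Spec.fromSpecStalk_eq _ _).trans
      congr(Spec.map $((Spec.algebraMap_stalkIso_inv q).symm))
  let φ' : X.presheaf.stalk (genericPoint X) ⟶ .of (Localization.AtPrime p) := CommRingCat.ofHom φ
  let ψ' : .of (Localization.AtPrime p) ⟶ X.presheaf.stalk (genericPoint X) := CommRingCat.ofHom ψ
  have hφψ : φ' ≫ ψ' = 𝟙 _ := CommRingCat.hom_ext hψφ
  have hτφ : CommRingCat.ofHom τ ≫ φ' = CommRingCat.ofHom a ≫ ℓ := CommRingCat.hom_ext hφτ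
  have haψ : CommRingCat.ofHom a ≫ ℓ ≫ ψ' = CommRingCat.ofHom τ := by
    rw [← reassoc_of% hτφ, hφψ]
    exact Category.comp_id _
  obtain ⟨V, hqV, g₀, hg₀, hg₀s⟩ := spread_out_of_isGermInjective' sS sX (x := q)
    (Spec.map e.inv ≫ Spec.map φ' ≫ X.fromSpecStalk _) (by
      rw [Category.assoc, Category.assoc, hτ, he, Category.assoc, ← Spec.map_comp,
        ← Spec.map_comp, Category.assoc, reassoc_of% hτφ, Spec.map_comp, Spec.map_comp]
      rfl)
  obtain ⟨U₀, hU₀, f₀, hf₀, hf₀s⟩ := spread_out_of_isGermInjective' sX sS (x := genericPoint X)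
    (Spec.map ψ' ≫ Spec.map ℓ) (by
      rw [Category.assoc, hτ, ← Spec.map_comp, ← Spec.map_comp, Category.assoc, haψ])
  let m : Spec (X.presheaf.stalk (genericPoint X)) ⟶ V :=
    Spec.map (e.hom ≫ ψ') ≫ V.fromSpecStalkOfMem q hqV
  have hmι : m ≫ V.ι = Spec.map ψ' ≫ Spec.map ℓ := by
    rw [Category.assoc, Scheme.Opens.fromSpecStalkOfMem_ι, he]
    simp only [← Spec.map_comp, Category.assoc, Iso.inv_hom_id_assoc]
  have hmg : m ≫ g₀ = X.fromSpecStalk (genericPoint X) := by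
    rw [Category.assoc, ← hg₀]
    simp only [← Spec.map_comp_assoc, Category.assoc, Iso.inv_hom_id_assoc, hφψ, Spec.map_id,
      Category.id_comp]
  let U : U₀.toScheme.Opens := f₀ ⁻¹ᵁ V
  let u : U.toScheme ⟶ X := U.ι ≫ U₀.ι
  let f₁ : U.toScheme ⟶ V := f₀ ∣_ V
  have hf₁ : f₁ ≫ V.ι = U.ι ≫ f₀ := morphismRestrict_ι _ _
  obtain ⟨n, hn⟩ := exists_lift_of_closedPoint_mem U.ι (U₀.fromSpecStalkOfMem _ hU₀) (by
    rw [Scheme.Opens.range_ι]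
    change (U₀.fromSpecStalkOfMem _ hU₀ ≫ f₀) (IsLocalRing.closedPoint _) ∈ V
    rw [← hf₀, ← hmι]
    exact (m (IsLocalRing.closedPoint _)).2)
  have hnu : n ≫ u = X.fromSpecStalk (genericPoint X) := by
    simp [u, reassoc_of% hn]
  have hnf : n ≫ f₁ = m := by
    rw [← cancel_mono V.ι, Category.assoc, hf₁, reassoc_of% hn, ← hf₀, hmι]
  have : IsDominant (n ≫ u) := by
    refine ⟨?_⟩
    rw [hnu]
    exact (dense_iff_closure_eq.mpr (genericPoint_closure (α := X))).mono
      (Set.singleton_subset_iff.mpr ⟨_, Scheme.fromSpecStalk_closedPoint⟩)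
  have : IsDominant n := .of_comp_of_isOpenImmersion n u
  have hfg : f₁ ≫ g₀ = u := by
    refine ext_of_isDominant_of_isSeparated sX ?_ n ?_
    · rw [Category.assoc, hg₀s, reassoc_of% hf₁, hf₀s, Category.assoc]
    · rw [reassoc_of% hnf, hmg, hnu]
  let v : V.toScheme ⟶ P := V.ι ≫ c
  let f : X.PartialMap P :=
    { domain := U₀
      dense_domain := U₀.2.dense ⟨_, hU₀⟩
      hom := f₀ ≫ c }
  let g : P.PartialMap X :=
    { domain := v.opensRange
      dense_domain := hP _ ⟨v ⟨q, hqV⟩, ⟨q, hqV⟩, rfl⟩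
      hom := v.isoOpensRange.inv ≫ g₀ }
  have hle : u.opensRange ≤ f.domain := by
    rintro _ ⟨y, rfl⟩
    exact (U.ι y).2
  refine ⟨f, g, ?_, ?_, u.opensRange, u.opensRange.2.dense ?_, hle,
    u.isoOpensRange.inv ≫ f₁ ≫ v.isoOpensRange.hom, ?_, ?_⟩
  · change (f₀ ≫ c) ≫ sP = U₀.ι ≫ sX
    rw [Category.assoc, hc, hf₀s]
  · change (v.isoOpensRange.inv ≫ g₀) ≫ sX = v.opensRange.ι ≫ sP
    rw [Category.assoc, hg₀s, ← Scheme.Hom.isoOpensRange_inv_comp, Category.assoc, Category.assoc,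
      hc]
  · exact ⟨_, n (IsLocalRing.closedPoint _), rfl⟩
  · change (u.isoOpensRange.inv ≫ f₁ ≫ v.isoOpensRange.hom) ≫ v.opensRange.ι =
      X.homOfLE hle ≫ f₀ ≫ c
    have : X.homOfLE hle = u.isoOpensRange.inv ≫ U.ι := by
      rw [← cancel_mono U₀.ι, Category.assoc]
      exact (X.homOfLE_ι hle).trans (Scheme.Hom.isoOpensRange_inv_comp u).symm
    simp [this, v, reassoc_of% hf₁]
  · change (u.isoOpensRange.inv ≫ f₁ ≫ v.isoOpensRange.hom) ≫ v.isoOpensRange.inv ≫ g₀ = _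
    simp [hfg]

/-- A variety whose function field is a retract of a local ring of affine space is retract
rational. -/
lemma IsRetractRational.of_isLocalRetract {k : Type u} [Field k] {X : Scheme.{u}} [IsIntegral X]
    {sX : X ⟶ Spec (.of k)} [LocallyOfFiniteType sX] [IsSeparated sX] {n : ℕ} (hn : 1 ≤ n)
    (τ : k →+* X.presheaf.stalk (genericPoint X))
    (hτ : X.fromSpecStalk (genericPoint X) ≫ sX = Spec.map (CommRingCat.ofHom τ))
    (H : RingHom.IsLocalRetract (MvPolynomial.C : k →+* MvPolynomial (Fin n) k) τ) :
    IsRetractRational k X sX := by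
  have := ProjSpace.isDomain_away k n 0
  exact ⟨n, hn, AlgebraicGeometry.exists_compEqId _ (ProjSpace.finiteType_toAway k n 0) _
    (ProjSpace.chart_structMap_s5 k n 0) (fun _ ↦ ProjSpace.dense_of_nonempty k n) τ hτ H.toAway⟩

lemma AlgebraicGeometry.genericPoint_mem {X : Scheme.{u}} [IrreducibleSpace X] {U : X.Opens}
    (hU : Dense (U : Set X)) : genericPoint X ∈ U :=
  (genericPoint_specializes hU.nonempty.some).mem_open U.2 hU.nonempty.some_mem

/-- **Lemma 3 (Schreieder).**  Let `h : X → Y` be a dominant morphism of `k`-varieties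
whose generic fibre `X_η` is irreducible.  If `X_η` is retract rational over the function
field `k(Y)` and `Y` is retract rational over `k`, then `X` is retract rational over
`k`. -/
theorem isRetractRational_of_genericFibre_of_base
    (k : Type u) [Field k]
    (X Y : Scheme.{u}) (sX : X ⟶ Spec (CommRingCat.of k)) (sY : Y ⟶ Spec (CommRingCat.of k))
    [IsIntegral X] [LocallyOfFiniteType sX] [QuasiCompact sX] [IsSeparated sX]
    [IsIntegral Y] [LocallyOfFiniteType sY] [QuasiCompact sY] [IsSeparated sY]
    (h : X ⟶ Y) (hover : h ≫ sY = sX) [IsDominant h]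
    [IrreducibleSpace (GenericFibre h)]
    (hfib : IsRetractRational (Y.functionField) (GenericFibre h) (GenericFibre.structMap h))
    (hYrr : IsRetractRational k Y sY) :
    IsRetractRational k X sX := by
  have hη : h (genericPoint X) = genericPoint Y := by
    refine ((genericPoint_spec X).image h.continuous).eq ?_
    rw [Set.image_univ, h.denseRange.closure_range]
    exact genericPoint_spec Y
  obtain ⟨φ, hφ⟩ := exists_specMap_fromSpecStalk (x := genericPoint Y)
    (X.fromSpecStalk (genericPoint X) ≫ h)
    (congr(h $(Scheme.fromSpecStalk_closedPoint)).trans hη)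
  obtain ⟨τ, hτ⟩ := Spec.map_surjective (Y.fromSpecStalk (genericPoint Y) ≫ sY)
  obtain ⟨M, hM⟩ := hYrr.exists_isLocalRetract (𝟙 Y) (Y.fromSpecStalk (genericPoint Y))
    (Category.comp_id _)
    (fun U hU ↦ by rw [Scheme.fromSpecStalk_closedPoint]; exact genericPoint_mem hU)
    τ.hom hτ.symm
  let j : Spec (X.presheaf.stalk (genericPoint X)) ⟶ GenericFibre h :=
    pullback.lift (X.fromSpecStalk (genericPoint X)) (Spec.map φ) hφ.symm
  let p : GenericFibre h ⟶ X := pullback.fst h (Y.fromSpecStalk (genericPoint Y))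
  have : Mono p := inferInstanceAs (Mono (pullback.fst _ _))
  have : IsPreimmersion p := inferInstanceAs (IsPreimmersion (pullback.fst _ _))
  have hjp : j ≫ p = X.fromSpecStalk (genericPoint X) := pullback.lift_fst _ _ _
  have hpj : p (j (IsLocalRing.closedPoint _)) = genericPoint X :=
    congr($hjp _).trans Scheme.fromSpecStalk_closedPoint
  have hj : j (IsLocalRing.closedPoint _) = genericPoint (GenericFibre h) := by
    apply p.isEmbedding.injective
    rw [hpj]
    refine (genericPoint_specializes _).antisymm ?_ |>.eq
    rw [← hpj]
    exact (genericPoint_specializes _).map p.continuous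
  obtain ⟨N, hN⟩ := hfib.exists_isLocalRetract p j hjp
    (fun U hU ↦ by rw [hj]; exact genericPoint_mem hU) φ.hom (pullback.lift_snd _ _ _)
  have H := (hM.trans_mvPolynomial hN).of_retract
    (MvPolynomial.renameEquiv k finSumFinEquiv).toRingEquiv.toRingHom
    (MvPolynomial.renameEquiv k finSumFinEquiv).symm.toRingEquiv.toRingHom (by ext <;> simp)
  refine .of_isLocalRetract (n := N + 1 + (M + 1)) (by lia) (φ.hom.comp τ.hom) ?_ ?_
  · rw [← hover, ← reassoc_of% hφ, ← hτ, ← Spec.map_comp]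
    rfl
  · convert H using 1
    ext
    simp
end

section
/- Let k be a field. Every retract rational k-variety is geometrically integral. -/
open AlgebraicGeometry CategoryTheory CategoryTheory.Limits TopologicalSpace

universe u

attribute [local instance] MvPolynomial.gradedAlgebra

namespace AlgebraicGeometry

lemma IsDominant.irreducibleSpace {X Y : Scheme.{u}} (f : X ⟶ Y) [IsDominant f]
    [IrreducibleSpace X] : IrreducibleSpace Y := by
  rw [irreducibleSpace_def, Set.top_eq_univ, ← f.denseRange.closure_range, ← Set.image_univ]
  exact ((IrreducibleSpace.isIrreducible_univ X).image f f.continuous.continuousOn).closure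

/-- Integrality of a flat base change descends along dominant quasi-compact morphisms to a
reduced scheme. -/
lemma isIntegral_pullback_of_isDominant {X Y S T : Scheme.{u}} (s : X ⟶ S) (t : T ⟶ S) [Flat t]
    (g : Y ⟶ X) [IsDominant g] [QuasiCompact g] [IsReduced X] [IsIntegral (pullback (g ≫ s) t)] :
    IsIntegral (pullback s t) := by
  have : IsSchemeTheoreticallyDominant g := .of_isDominant g
  have : IsIntegral (pullback g (pullback.fst s t)) :=
    .of_isIso (pullbackRightPullbackFstIso s t g).inv
  let p := pullback.snd g (pullback.fst s t)
  have : IsReduced (pullback s t) := IsSchemeTheoreticallyDominant.isReduced p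
  have : IrreducibleSpace ↥(pullback s t) := IsDominant.irreducibleSpace p
  exact isIntegral_of_irreducibleSpace_of_isReduced _

lemma isIntegral_pullback_Spec_mvPolynomial (σ : Type) (k K : Type u) [Field k] [Field K]
    [Algebra k K] :
    IsIntegral (pullback (Spec.map (CommRingCat.ofHom (MvPolynomial.C : k →+* MvPolynomial σ k)))
      (Spec.map (CommRingCat.ofHom (algebraMap k K)))) := by
  let e : TensorProduct k (MvPolynomial σ k) K ≃+* MvPolynomial σ K :=
    (Algebra.TensorProduct.comm k _ K).toRingEquiv.trans
      (MvPolynomial.algebraTensorAlgEquiv k K).toRingEquiv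
  have : IsDomain (TensorProduct k (MvPolynomial σ k) K) := MulEquiv.isDomain _ e.toMulEquiv
  have h := IsIntegral.of_isIso (pullbackSpecIso k (MvPolynomial σ k) K).inv
  exact h

/-- A nonempty open subscheme of affine space over a field is geometrically integral. -/
lemma isIntegral_pullback_of_isOpenImmersion_Spec_mvPolynomial {σ : Type} {k : Type u} (K : Type u)
    [Field k] [Field K] [Algebra k K] {Y : Scheme.{u}} [Nonempty Y]
    (j : Y ⟶ Spec (CommRingCat.of (MvPolynomial σ k))) [IsOpenImmersion j] :
    IsIntegral (pullback (j ≫ Spec.map (CommRingCat.ofHom MvPolynomial.C))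
      (Spec.map (CommRingCat.ofHom (algebraMap k K)))) := by
  let s := Spec.map (CommRingCat.ofHom (MvPolynomial.C : k →+* MvPolynomial σ k))
  let t := Spec.map (CommRingCat.ofHom (algebraMap k K))
  have : IsIntegral (pullback s t) := isIntegral_pullback_Spec_mvPolynomial σ k K
  have : Nonempty ↥(pullback (j ≫ s) t) := by
    obtain ⟨y⟩ := ‹Nonempty Y›
    obtain ⟨z, -⟩ := (pullback.fst (j ≫ s) t).surjective y
    exact ⟨z⟩
  exact isIntegral_of_isOpenImmersion
    ((pullbackRightPullbackFstIso s t j).inv ≫ pullback.snd j (pullback.fst s t))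

/-- If an open subscheme of affine space dominates a reduced `k`-scheme, then the latter is
geometrically integral. -/
lemma isIntegral_pullback_of_isDominant_of_isOpenImmersion {σ : Type} [Finite σ] {k : Type u}
    (K : Type u) [Field k] [Field K] [Algebra k K] {X Y : Scheme.{u}}
    (sX : X ⟶ Spec (CommRingCat.of k)) [IsReduced X] [Nonempty X]
    (j : Y ⟶ Spec (CommRingCat.of (MvPolynomial σ k))) [IsOpenImmersion j]
    (g : Y ⟶ X) [IsDominant g]
    (h : g ≫ sX = j ≫ Spec.map (CommRingCat.ofHom MvPolynomial.C)) :
    IsIntegral (pullback sX (Spec.map (CommRingCat.ofHom (algebraMap k K)))) := by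
  have : Nonempty Y := g.denseRange.nonempty
  have : NoetherianSpace Y := j.isOpenEmbedding.isInducing.noetherianSpace
  have : IsIntegral (pullback (g ≫ sX) (Spec.map (CommRingCat.ofHom (algebraMap k K)))) := by
    rw [h]
    exact isIntegral_pullback_of_isOpenImmersion_Spec_mvPolynomial K j
  exact isIntegral_pullback_of_isDominant sX _ g

lemma isDominant_Spec_map_of_injective {R S : Type u} [CommRing R] [CommRing S] (φ : R →+* S)
    (hφ : Function.Injective φ) : IsDominant (Spec.map (CommRingCat.ofHom φ)) := by
  refine ⟨(PrimeSpectrum.denseRange_comap_iff_ker_le_nilRadical φ).mpr ?_⟩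
  rw [(RingHom.injective_iff_ker_eq_bot φ).mp hφ]
  exact bot_le

lemma isDominant_of_genericPoint_mem_range {X Y : Scheme.{u}} [IrreducibleSpace Y] (f : X ⟶ Y)
    (h : genericPoint Y ∈ Set.range f) : IsDominant f :=
  ⟨(dense_iff_closure_eq.mpr (genericPoint_spec Y)).mono (Set.singleton_subset_iff.mpr h)⟩

lemma IsDominant.pullback_snd_of_isOpenImmersion {X Y S : Scheme.{u}} (f : X ⟶ S) (g : Y ⟶ S)
    [IsDominant f] [IsOpenImmersion g] : IsDominant (pullback.snd f g) := by
  refine ⟨?_⟩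
  rw [DenseRange, Scheme.Pullback.range_snd]
  exact f.denseRange.preimage g.isOpenEmbedding.isOpenMap

lemma Proj.exists_mem_range_awayι {σ : Type*} {A : Type u} [CommRing A] [SetLike σ A]
    [AddSubgroupClass σ A] (𝒜 : ℕ → σ) [GradedRing 𝒜] (x : Proj 𝒜) :
    ∃ (m : ℕ) (f : A) (hf : f ∈ 𝒜 m) (hm : 0 < m), x ∈ Set.range (Proj.awayι 𝒜 f hf hm) := by
  obtain ⟨y, hy⟩ := (Proj.affineOpenCover 𝒜).covers x
  exact ⟨_, _, _, _, y, hy⟩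

/-- On the cone over a standard affine chart of projective space, the structure morphism of
projective space is that of affine space. -/
lemma awayι_structMap {k : Type u} [Field k] {N m : ℕ} {f : MvPolynomial (Fin (N + 1)) k}
    (hf : f ∈ MvPolynomial.homogeneousSubmodule (Fin (N + 1)) k m) (hm : 0 < m) :
    Spec.map (CommRingCat.ofHom (algebraMap
        (HomogeneousLocalization.Away (MvPolynomial.homogeneousSubmodule (Fin (N + 1)) k) f)
        (Localization.Away f))) ≫ Proj.awayι _ f hf hm ≫ ProjSpace.structMap k N =
      Spec.map (CommRingCat.ofHom (algebraMap (MvPolynomial (Fin (N + 1)) k)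
        (Localization.Away f))) ≫ Spec.map (CommRingCat.ofHom MvPolynomial.C) := by
  have h := Proj.awayι_toSpecZero_assoc _ _ hf hm (Spec.map (CommRingCat.ofHom
    ((GradedRing.projZeroRingHom' (MvPolynomial.homogeneousSubmodule (Fin (N + 1)) k)).comp
      (MvPolynomial.C : k →+* MvPolynomial (Fin (N + 1)) k))))
  refine (congrArg (_ ≫ ·) h).trans ?_
  rw [← Spec.map_comp, ← Spec.map_comp, ← Spec.map_comp]
  congr 1
  ext c
  have hc : (GradedRing.projZeroRingHom' (MvPolynomial.homogeneousSubmodule (Fin (N + 1)) k)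
      (MvPolynomial.C c)).1 = MvPolynomial.C c :=
    DirectSum.decompose_of_mem_same _ (MvPolynomial.isHomogeneous_C _ c)
  exact (congrArg (Localization.mk · 1) hc).trans (Localization.mk_one_eq_algebraMap _)

end AlgebraicGeometry

/-- Every retract rational `k`-variety is geometrically integral:  its base change to an
algebraic closure of `k` is an integral scheme. -/
theorem isIntegral_baseChange_of_isRetractRational
    (k : Type u) [Field k] (X : Scheme.{u}) (sX : X ⟶ Spec (CommRingCat.of k))
    [IsIntegral X] [LocallyOfFiniteType sX] [QuasiCompact sX] [IsSeparated sX]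
    (hX : IsRetractRational k X sX) :
    IsIntegral (baseChange (AlgebraicClosure k) sX) := by
  obtain ⟨N, -, f, g, -, hg, U, hU, -, l, -, hl⟩ := hX
  obtain ⟨x⟩ : Nonempty U := hU.nonempty.to_subtype
  have hx : genericPoint X ∈ U :=
    ((genericPoint_spec X).mem_open_set_iff U.isOpen).mpr (by simpa using ⟨x.1, x.2⟩)
  let ξ := l ⟨genericPoint X, hx⟩
  have hξ : g.hom ξ = genericPoint X :=
    congrArg (fun φ : (U : Scheme) ⟶ X ↦ φ ⟨genericPoint X, hx⟩) hl
  obtain ⟨m, a, ha, hm, w, hw⟩ := Proj.exists_mem_range_awayι _ (g.domain.ι ξ)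
  let c : _ ⟶ ProjSpace k N := Proj.awayι _ a ha hm
  let p := Spec.map (CommRingCat.ofHom (algebraMap
    (HomogeneousLocalization.Away (MvPolynomial.homogeneousSubmodule (Fin (N + 1)) k) a)
    (Localization.Away a)))
  let j := Spec.map (CommRingCat.ofHom (algebraMap (MvPolynomial (Fin (N + 1)) k)
    (Localization.Away a)))
  have : IsOpenImmersion j := IsOpenImmersion.of_isLocalization a
  have : IsDominant p :=
    isDominant_Spec_map_of_injective _ (HomogeneousLocalization.val_injective _)
  obtain ⟨z, -, hz'⟩ := Scheme.Pullback.exists_preimage_pullback (f := c) w ξ hw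
  let q : pullback c g.domain.ι ⟶ X := pullback.snd c g.domain.ι ≫ g.hom
  have : IsDominant q := isDominant_of_genericPoint_mem_range q ⟨z, by
    rw [Scheme.Hom.comp_apply, hz', hξ]⟩
  let r := pullback.snd p (pullback.fst c g.domain.ι)
  have : IsDominant r := .pullback_snd_of_isOpenImmersion _ _
  refine isIntegral_pullback_of_isDominant_of_isOpenImmersion (AlgebraicClosure k) sX
    (pullback.fst p (pullback.fst c g.domain.ι) ≫ j) (r ≫ q) ?_
  have hg' : g.hom ≫ sX = g.domain.ι ≫ ProjSpace.structMap k N := hg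
  rw [Category.assoc, Category.assoc, Category.assoc, hg',
    ← pullback.condition_assoc, ← awayι_structMap ha hm]
  exact (pullback.condition_assoc _).symm
end
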